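/- Consider the uncoupled system of four pendula ẍ_i + sin x_i = 0, i = 1, …, 4. Let q, p ∈ ℝ⁴ be such that for each i the pair (α, β) = (q_i, p_i) satisfies one of the admissibility conditions of the Pendulum Lemma (namely: |α| ≤ 1 and |β − π| < 1; or |α + π| ≤ 1 and |β| ≤ 1; or |α| ≤ 1 and |β − 2π| ≤ 1; or β − α ≥ 2π). Then for every T > 0 there is a unique solution X(t; T, q, p) of the uncoupled system with X(0) = q and X(T) = p whose i-th component satisfies the corresponding confinement of the Pendulum Lemma; moreover, there is a unique T* = T*(q,p) > 0 such that the total energy Σ_{i=1}^{4} [Ẋ_i²/2 + (−cos X_i − 1)] of this solution equals 1, and T* depends smoothly on (q, p). -/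

import Mathlib

/-- The pendulum potential `V(x) = −cos x − 1`. -/
noncomputable def Vpend (x : ℝ) : ℝ := -Real.cos x - 1

/-- `IsPendSolOn x v s` : on the set `s`, `x` solves the pendulum equation
`ẍ + sin x = 0`, with velocity `v`. -/
def IsPendSolOn (x v : ℝ → ℝ) (s : Set ℝ) : Prop :=
  ∀ t ∈ s, HasDerivAt x (v t) t ∧ HasDerivAt v (-Real.sin (x t)) t

/-- The four admissibility cases of the Pendulum Lemma for boundary values `(α, β)`. -/
def AdmissCase (k : Fin 4) (α β : ℝ) : Prop :=
  if k = 0 then |α| ≤ 1 ∧ |β - Real.pi| < 1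
  else if k = 1 then |α + Real.pi| ≤ 1 ∧ |β| ≤ 1
  else if k = 2 then |α| ≤ 1 ∧ |β - 2 * Real.pi| ≤ 1
  else 2 * Real.pi ≤ β - α

/-- The corresponding confinement interval of the Pendulum Lemma. -/
noncomputable def ConfineSet (k : Fin 4) (α β : ℝ) : Set ℝ :=
  if k = 0 then Set.Icc α (max β Real.pi)
  else if k = 1 then Set.Icc (-1 - Real.pi) 1
  else if k = 2 then Set.Icc (-1) (2 * Real.pi + 1)
  else Set.Icc α β

/-!
Short flow lines of a smooth Lipschitz vector field are the zeros of a smooth map on a Banach space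
of paths, so by the implicit function theorem the flow is smooth. Each two-point problem is solved
by shooting: the only unknown is the initial velocity, and the Jacobi field along a shot is positive
at the final time, so the velocity is unique and depends smoothly on the data.

Let `e` be the energy of a shot as a function of `T`. It need not be monotone, because a shot may
overshoot its target and turn back, but `-T e' ≥ 2 e` where `e > 0` and `-T e' > 2 e - 2 / 3` where
`e ≤ 0`. If `n` shots have total energy `h > 0` then at most `n - 1` energies are nonpositive, so
`-T (∑ e)' > 2 h - (2 / 3) (n - 1) ≥ 0` as soon as `n ≤ 3 h + 1`. The total energy therefore crosses
the level `h` only downwards, hence only once. It does attain `h`, as it stays within a bounded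
distance of half the sum of the squared slopes; and the crossing time is smooth by the implicit
function theorem.
-/

open Filter Metric Set Topology
open scoped ContDiff Manifold NNReal Real

/-! ### Superposition operators on spaces of continuous maps -/

section Superposition

universe u

variable {X : Type*} [TopologicalSpace X] [CompactSpace X]
  {E F : Type u} [NormedAddCommGroup E] [NormedSpace ℝ E] [NormedAddCommGroup F] [NormedSpace ℝ F]

/-- The superposition (Nemytskii) operator `x ↦ f ∘ x` on `C(X, E)`; it carries the smoothness of
`f` over to the integral equation satisfied by the flow of `f`. -/
def superposition (f : E → F) (hf : Continuous f) (x : C(X, E)) : C(X, F) :=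
  ContinuousMap.comp ⟨f, hf⟩ x

/-- The pointwise application of a continuous family of operators, as a bounded operator on spaces
of continuous maps. -/
noncomputable def pointwiseApply : C(X, E →L[ℝ] F) →L[ℝ] C(X, E) →L[ℝ] C(X, F) :=
  LinearMap.mkContinuous₂
    (LinearMap.mk₂ ℝ
      (fun (A : C(X, E →L[ℝ] F)) (h : C(X, E)) ↦ (⟨fun s ↦ A s (h s), by fun_prop⟩ : C(X, F)))
      (fun _ _ _ ↦ by ext; simp) (fun _ _ _ ↦ by ext; simp)
      (fun _ _ _ ↦ by ext; simp) (fun _ _ _ ↦ by ext; simp)) 1 (by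
    intro A h
    refine (ContinuousMap.norm_le _ (by positivity)).mpr fun s ↦ ?_
    calc ‖A s (h s)‖ ≤ ‖A s‖ * ‖h s‖ := (A s).le_opNorm _
      _ ≤ 1 * ‖A‖ * ‖h‖ := by
        rw [one_mul]; gcongr; exacts [A.norm_coe_le_norm s, h.norm_coe_le_norm s])

theorem exists_forall_norm_fderiv_sub_le {f : E → F} (hf : ContDiff ℝ 1 f) {s : Set E}
    (hs : IsCompact s) {ε : ℝ} (hε : 0 < ε) :
    ∃ δ > 0, ∀ a ∈ s, ∀ b ∈ ball a δ, ‖fderiv ℝ f b - fderiv ℝ f a‖ ≤ ε := by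
  have huc := hs.uniformContinuousAt_of_continuousAt (fderiv ℝ f)
    (fun a _ ↦ (hf.continuous_fderiv one_ne_zero).continuousAt) (Metric.dist_mem_uniformity hε)
  obtain ⟨δ, hδ, h⟩ := Metric.mem_uniformity_dist.mp huc
  refine ⟨δ, hδ, fun a ha b hb ↦ ?_⟩
  rw [← dist_eq_norm, dist_comm]
  exact (h (mem_ball'.mp hb) ha).le

theorem hasFDerivAt_superposition {f : E → F} (hf : ContDiff ℝ 1 f) (x : C(X, E)) :
    HasFDerivAt (superposition f hf.continuous)
      (pointwiseApply (superposition (fderiv ℝ f) (hf.continuous_fderiv one_ne_zero) x)) x := by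
  rw [hasFDerivAt_iff_isLittleO_nhds_zero, Asymptotics.isLittleO_iff]
  intro ε hε
  obtain ⟨δ, hδ, h⟩ := exists_forall_norm_fderiv_sub_le hf (isCompact_range x.continuous) hε
  filter_upwards [ball_mem_nhds (0 : C(X, E)) hδ] with k hk
  refine (ContinuousMap.norm_le _ (by positivity)).mpr fun s ↦ ?_
  have hks : x s + k s ∈ ball (x s) δ := by
    simpa using (k.norm_coe_le_norm s).trans_lt (mem_ball_zero_iff.mp hk)
  have hmv := (convex_ball (x s) δ).norm_image_sub_le_of_norm_hasFDerivWithin_le'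
    (fun b _ ↦ (hf.differentiable one_ne_zero b).hasFDerivAt.hasFDerivWithinAt)
    (h (x s) ⟨s, rfl⟩) (mem_ball_self hδ) hks
  rw [add_sub_cancel_left] at hmv
  calc _ ≤ ε * ‖k s‖ := hmv
    _ ≤ ε * ‖k‖ := by gcongr; exact k.norm_coe_le_norm s

theorem contDiff_superposition {f : E → F} (hf : ContDiff ℝ ∞ f) :
    ContDiff ℝ ∞ (superposition f hf.continuous : C(X, E) → C(X, F)) := by
  suffices H : ∀ (n : ℕ) {F : Type u} [NormedAddCommGroup F] [NormedSpace ℝ F] {f : E → F}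
      (hf : ContDiff ℝ ∞ f), ContDiff ℝ n (superposition f hf.continuous : C(X, E) → C(X, F)) from
    contDiff_infty.mpr fun n ↦ H n hf
  intro n
  induction n with
  | zero =>
    intro F _ _ f hf
    exact contDiff_zero.mpr (ContinuousMap.continuous_postcomp ⟨f, hf.continuous⟩)
  | succ n ih =>
    intro F _ _ f hf
    push_cast
    rw [contDiff_succ_iff_hasFDerivAt]
    exact ⟨_, pointwiseApply.contDiff.comp (ih (hf.fderiv_right (m := ∞) (by simp))),
      hasFDerivAt_superposition (hf.of_le (by simp))⟩

end Superposition

/-! ### The flow of a smooth Lipschitz vector field -/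

section Flow

theorem isPicardLindelof_of_lipschitzWith {E : Type*} [NormedAddCommGroup E] {f : E → E}
    {K : ℝ≥0} (hK : LipschitzWith K f) (x : E) :
    IsPicardLindelof (fun _ ↦ f) (tmin := -(2 * (K + 1))⁻¹) (tmax := (2 * (K + 1))⁻¹)
      ⟨0, neg_nonpos.mpr (by positivity), by positivity⟩ x ‖f x‖₊ 0 (2 * (K + 1) * ‖f x‖₊) K := by
  refine .of_time_independent (fun y hy ↦ ?_) hK.lipschitzOnWith ?_
  · have hsub : ‖f y - f x‖ ≤ K * ‖f x‖ :=
      (hK.norm_sub_le y x).trans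
        (mul_le_mul_of_nonneg_left (mem_closedBall_iff_norm.mp hy) K.coe_nonneg)
    push_cast [coe_nnnorm]
    nlinarith [norm_le_norm_add_norm_sub' (f y) (f x), norm_nonneg (f x), K.coe_nonneg]
  · simp only [sub_zero, zero_sub, neg_neg, NNReal.coe_zero]
    push_cast [coe_nnnorm]
    rw [max_self]
    exact le_of_eq (by field_simp)

variable {E : Type*} [NormedAddCommGroup E] [NormedSpace ℝ E] {f : E → E} {K : ℝ≥0}

/-- `Φ (t, z)` is the position at time `t` of the solution of `ẋ = f x` starting at `z`. -/
structure IsFlow (f : E → E) (Φ : ℝ × E → E) : Prop where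
  map_zero : ∀ z, Φ (0, z) = z
  hasDerivAt : ∀ t z, HasDerivAt (fun s ↦ Φ (s, z)) (f (Φ (t, z))) t

namespace IsFlow

variable {Φ : ℝ × E → E}

theorem continuous_left (hΦ : IsFlow f Φ) (z : E) : Continuous fun t ↦ Φ (t, z) :=
  continuous_iff_continuousAt.mpr fun t ↦ (hΦ.hasDerivAt t z).continuousAt

theorem eq_of_hasDerivAt (hΦ : IsFlow f Φ) (hK : LipschitzWith K f) {γ : ℝ → E}
    (hγ : ∀ t, HasDerivAt γ (f (γ t)) t) (t : ℝ) : γ t = Φ (t, γ 0) :=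
  congrFun (ODE_solution_unique_univ (v := fun _ ↦ f) (s := fun _ ↦ univ) (t₀ := 0)
    (fun _ ↦ hK.lipschitzOnWith) (fun t ↦ ⟨hγ t, mem_univ _⟩)
    (fun t ↦ ⟨hΦ.hasDerivAt t (γ 0), mem_univ _⟩) (hΦ.map_zero (γ 0)).symm) t

theorem eqOn_Icc_of_hasDerivAt (hΦ : IsFlow f Φ) (hK : LipschitzWith K f) {γ : ℝ → E} {T : ℝ}
    (hγ : ∀ t ∈ Icc 0 T, HasDerivAt γ (f (γ t)) t) : EqOn γ (fun t ↦ Φ (t, γ 0)) (Icc 0 T) :=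
  ODE_solution_unique (v := fun _ ↦ f) (fun _ ↦ hK)
    (fun t ht ↦ (hγ t ht).continuousAt.continuousWithinAt)
    (fun t ht ↦ (hγ t (Ico_subset_Icc_self ht)).hasDerivWithinAt)
    (hΦ.continuous_left (γ 0)).continuousOn
    (fun t _ ↦ (hΦ.hasDerivAt t (γ 0)).hasDerivWithinAt) (hΦ.map_zero (γ 0)).symm

theorem map_add (hΦ : IsFlow f Φ) (hK : LipschitzWith K f) (s t : ℝ) (z : E) :
    Φ (s + t, z) = Φ (t, Φ (s, z)) := by
  simpa using hΦ.eq_of_hasDerivAt hK (γ := fun r ↦ Φ (s + r, z))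
    (fun r ↦ (hΦ.hasDerivAt (s + r) z).comp_const_add s r) t

end IsFlow

/-- Integration from `0`, as a linear operator on paths parametrised by the unit interval. -/
noncomputable def pathIntegralₗ : C(unitInterval, E) →ₗ[ℝ] C(unitInterval, E) where
  toFun x := ⟨fun s ↦ ∫ r in (0 : ℝ)..s, IccExtend zero_le_one x r,
    (intervalIntegral.continuous_primitive
      (fun a b ↦ x.continuous.Icc_extend'.intervalIntegrable a b) 0).comp continuous_subtype_val⟩
  map_add' x y := by
    ext s
    exact intervalIntegral.integral_add (x.continuous.Icc_extend'.intervalIntegrable _ _)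
      (y.continuous.Icc_extend'.intervalIntegrable _ _)
  map_smul' c x := by
    ext s
    exact intervalIntegral.integral_smul c _

theorem norm_pathIntegralₗ_le (x : C(unitInterval, E)) : ‖pathIntegralₗ x‖ ≤ ‖x‖ := by
  refine (ContinuousMap.norm_le _ (norm_nonneg x)).mpr fun s ↦ ?_
  calc ‖∫ r in (0 : ℝ)..s, IccExtend zero_le_one x r‖ ≤ ‖x‖ * |(s : ℝ) - 0| :=
        intervalIntegral.norm_integral_le_of_norm_le_const fun r _ ↦ x.norm_coe_le_norm _
    _ ≤ ‖x‖ := by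
      rw [sub_zero, abs_of_nonneg s.2.1]
      exact mul_le_of_le_one_right (norm_nonneg x) s.2.2

/-- Integration from `0`, as a bounded operator on paths parametrised by the unit interval. -/
noncomputable def pathIntegral : C(unitInterval, E) →L[ℝ] C(unitInterval, E) :=
  pathIntegralₗ.mkContinuous 1 fun x ↦ (norm_pathIntegralₗ_le x).trans_eq (one_mul _).symm

theorem norm_pathIntegral_le (x : C(unitInterval, E)) : ‖pathIntegral x‖ ≤ ‖x‖ :=
  norm_pathIntegralₗ_le x

/-- The map whose zeros `((t, z), x)` are the paths `x s = Φ (s t, z)` along the flow of `f`,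
rescaled so that the time `t` becomes a parameter of an equation on a fixed Banach space. -/
noncomputable def picardDefect (f : E → E) (hf : Continuous f)
    (p : (ℝ × E) × C(unitInterval, E)) : C(unitInterval, E) :=
  p.2 - ContinuousMap.const unitInterval p.1.2 - p.1.1 • pathIntegral (superposition f hf p.2)

theorem contDiff_picardDefect (hf : ContDiff ℝ ∞ f) :
    ContDiff ℝ ∞ (picardDefect f hf.continuous) := by
  have hconst : ContDiff ℝ ∞ fun p : (ℝ × E) × C(unitInterval, E) ↦
      ContinuousMap.const unitInterval p.1.2 :=
    (ContinuousLinearMap.const ℝ unitInterval (M := E)).contDiff.comp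
      (contDiff_snd.comp contDiff_fst)
  have hint : ContDiff ℝ ∞ fun p : (ℝ × E) × C(unitInterval, E) ↦
      pathIntegral (superposition f hf.continuous p.2) :=
    pathIntegral.contDiff.comp ((contDiff_superposition hf).comp contDiff_snd)
  unfold picardDefect
  fun_prop

theorem picardDefect_injective (hK : LipschitzWith K f) {p : ℝ × E} (hp : |p.1| * K < 1)
    {x y : C(unitInterval, E)} (hx : picardDefect f hK.continuous (p, x) = 0)
    (hy : picardDefect f hK.continuous (p, y) = 0) : x = y := by
  have hxy : x - y = p.1 • pathIntegral
      (superposition f hK.continuous x - superposition f hK.continuous y) := by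
    rw [map_sub, smul_sub, ← sub_eq_zero.mp hx, ← sub_eq_zero.mp hy]
    exact (sub_sub_sub_cancel_right _ _ _).symm
  have hle : ‖x - y‖ ≤ |p.1| * K * ‖x - y‖ := by
    calc ‖x - y‖ ≤ |p.1| * ‖superposition f hK.continuous x - superposition f hK.continuous y‖ := by
          rw [hxy, norm_smul, Real.norm_eq_abs]
          gcongr
          exact norm_pathIntegral_le _
      _ ≤ |p.1| * (K * ‖x - y‖) := by
          gcongr
          refine (ContinuousMap.norm_le _ (by positivity)).mpr fun s ↦ ?_
          exact (hK.norm_sub_le (x s) (y s)).trans (by gcongr; exact (x - y).norm_coe_le_norm s)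
      _ = |p.1| * K * ‖x - y‖ := (mul_assoc _ _ _).symm
  exact sub_eq_zero.mp (norm_eq_zero.mp (by nlinarith [norm_nonneg (x - y)]))

variable [CompleteSpace E]

theorem exists_global_solution (hK : LipschitzWith K f) (hf : ContDiff ℝ 1 f) (x : E) :
    ∃ γ : ℝ → E, γ 0 = x ∧ ∀ t, HasDerivAt γ (f (γ t)) t := by
  obtain ⟨γ, h0, hγ⟩ := exists_isMIntegralCurve_of_isMIntegralCurveOn (I := 𝓘(ℝ, E))
    (v := f) (x := x) (contMDiff_vectorSpace_iff_contDiff.mpr hf)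
    (show (0 : ℝ) < (2 * (K + 1))⁻¹ by positivity) fun y ↦ by
      obtain ⟨γ, h0, hγ⟩ :=
        (isPicardLindelof_of_lipschitzWith hK y).exists_eq_forall_mem_Icc_hasDerivWithinAt₀
      exact ⟨γ, h0, fun t ht ↦ ((hγ t (Ioo_subset_Icc_self ht)).mono
        Ioo_subset_Icc_self).hasFDerivWithinAt.hasMFDerivWithinAt⟩
  exact ⟨γ, h0, fun t ↦ (hγ t).hasFDerivAt⟩

theorem exists_isFlow (hK : LipschitzWith K f) (hf : ContDiff ℝ 1 f) : ∃ Φ, IsFlow f Φ := by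
  choose γ h0 hγ using exists_global_solution hK hf
  exact ⟨fun p ↦ γ p.2 p.1, h0, fun t z ↦ hγ z t⟩

theorem isInvertible_fderiv_picardDefect (hK : LipschitzWith K f) (hf : ContDiff ℝ ∞ f)
    {p : ℝ × E} (hp : |p.1| * K < 1) (x : C(unitInterval, E)) :
    (fderiv ℝ (picardDefect f hf.continuous) (p, x) ∘L
      .inr ℝ (ℝ × E) C(unitInterval, E)).IsInvertible := by
  have hf1 : ContDiff ℝ 1 f := hf.of_le (by simp)
  set A := superposition (fderiv ℝ f) (hf1.continuous_fderiv one_ne_zero) x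
  set L : C(unitInterval, E) →L[ℝ] C(unitInterval, E) :=
    p.1 • pathIntegral ∘L pointwiseApply A with hL
  have hpartial : fderiv ℝ (picardDefect f hf.continuous) (p, x) ∘L
      .inr ℝ (ℝ × E) C(unitInterval, E) = 1 - L := by
    refine HasFDerivAt.unique (f := fun y ↦ picardDefect f hf.continuous (p, y)) (x := x) ?_ ?_
    · exact ((contDiff_picardDefect hf).differentiable (by simp) (p, x)).hasFDerivAt.comp x
        (hasFDerivAt_prodMk_right p x)
    · exact ((hasFDerivAt_id x).sub_const (ContinuousMap.const unitInterval p.2)).sub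
        ((pathIntegral.hasFDerivAt.comp x (hasFDerivAt_superposition hf1 x)).const_smul p.1)
  have hnorm : ‖L‖ < 1 := by
    refine (L.opNorm_le_bound (by positivity) fun h ↦ ?_).trans_lt hp
    rw [hL, _root_.smul_apply, norm_smul, Real.norm_eq_abs, mul_assoc]
    gcongr
    refine (norm_pathIntegral_le _).trans ((ContinuousMap.norm_le _ (by positivity)).mpr fun s ↦ ?_)
    calc ‖fderiv ℝ f (x s) (h s)‖ ≤ K * ‖h s‖ :=
          (fderiv ℝ f (x s)).le_of_opNorm_le (norm_fderiv_le_of_lipschitz ℝ hK) _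
      _ ≤ K * ‖h‖ := by gcongr; exact h.norm_coe_le_norm s
  obtain ⟨u, hu⟩ :=
    isUnit_one_sub_of_norm_lt_one (R := C(unitInterval, E) →L[ℝ] C(unitInterval, E)) hnorm
  exact ⟨.ofUnit u, hu.trans hpartial.symm⟩

namespace IsFlow

variable {Φ : ℝ × E → E}

/-- The flow line of `z` up to time `t`, run at constant speed over the unit interval. -/
def rescaledPath (hΦ : IsFlow f Φ) (p : ℝ × E) : C(unitInterval, E) where
  toFun s := Φ (s * p.1, p.2)
  continuous_toFun := (hΦ.continuous_left p.2).comp (by fun_prop)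

theorem picardDefect_rescaledPath (hΦ : IsFlow f Φ) (hf : Continuous f) (p : ℝ × E) :
    picardDefect f hf (p, hΦ.rescaledPath p) = 0 := by
  ext s
  have hcongr : ∫ r in (0 : ℝ)..s, IccExtend zero_le_one
      (superposition f hf (hΦ.rescaledPath p)) r = ∫ r in (0 : ℝ)..s, f (Φ (r * p.1, p.2)) := by
    refine intervalIntegral.integral_congr fun r hr ↦ ?_
    rw [uIcc_of_le s.2.1] at hr
    exact IccExtend_of_mem _ _ ⟨hr.1, hr.2.trans s.2.2⟩
  have hftc : ∫ r in (0 : ℝ)..s, p.1 • f (Φ (r * p.1, p.2)) = Φ (s * p.1, p.2) - p.2 := by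
    rw [intervalIntegral.integral_eq_sub_of_hasDerivAt (f := fun r ↦ Φ (r * p.1, p.2))
      (fun r _ ↦ by simpa [Function.comp_def] using
        (hΦ.hasDerivAt (r * p.1) p.2).scomp r ((hasDerivAt_id r).mul_const p.1))]
    · simp [hΦ.map_zero]
    · exact (continuous_const.smul (hf.comp ((hΦ.continuous_left p.2).comp
        (by fun_prop : Continuous fun r : ℝ ↦ r * p.1)))).intervalIntegrable _ _
  rw [intervalIntegral.integral_smul] at hftc
  rw [← hcongr] at hftc
  calc Φ (s * p.1, p.2) - p.2 - p.1 • ∫ r in (0 : ℝ)..s, IccExtend zero_le_one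
        (superposition f hf (hΦ.rescaledPath p)) r = 0 := by rw [hftc, sub_self]

theorem contDiffAt_of_abs_mul_lt_one (hΦ : IsFlow f Φ) (hK : LipschitzWith K f)
    (hf : ContDiff ℝ ∞ f) {p : ℝ × E} (hp : |p.1| * K < 1) : ContDiffAt ℝ ∞ Φ p := by
  have hdefect : ContDiffAt ℝ ∞ (picardDefect f hf.continuous) (p, hΦ.rescaledPath p) :=
    (contDiff_picardDefect hf).contDiffAt
  have hinv := isInvertible_fderiv_picardDefect hK hf hp (hΦ.rescaledPath p)
  have hsmall : ∀ᶠ q : ℝ × E in 𝓝 p, |q.1| * K < 1 :=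
    (by fun_prop : Continuous fun q : ℝ × E ↦ |q.1| * (K : ℝ)).continuousAt.eventually_lt
      continuousAt_const hp
  have hpath : hΦ.rescaledPath =ᶠ[𝓝 p] hdefect.implicitFunction (by simp) hinv := by
    filter_upwards [hdefect.eventually_apply_implicitFunction (by simp) hinv, hsmall] with q hq hq1
    rw [hΦ.picardDefect_rescaledPath] at hq
    exact picardDefect_injective hK hq1 (hΦ.picardDefect_rescaledPath hf.continuous q) hq
  have heval : Φ = fun q ↦ ContinuousMap.evalCLM ℝ (1 : unitInterval) (hΦ.rescaledPath q) := by
    ext q; simp [rescaledPath]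
  rw [heval]
  exact (ContinuousMap.evalCLM ℝ (1 : unitInterval)).contDiff.contDiffAt.comp p
    ((hdefect.contDiffAt_implicitFunction (by simp) hinv).congr_of_eventuallyEq hpath)

theorem contDiff (hΦ : IsFlow f Φ) (hK : LipschitzWith K f) (hf : ContDiff ℝ ∞ f) :
    ContDiff ℝ ∞ Φ := by
  have key (n : ℕ) : ∀ p : ℝ × E, |p.1| * K < n + 1 → ContDiffAt ℝ ∞ Φ p := by
    induction n with
    | zero => exact fun p hp ↦ hΦ.contDiffAt_of_abs_mul_lt_one hK hf (by simpa using hp)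
    | succ n ih =>
      intro p hp
      push_cast at hp
      -- The group law splits the time `t` into the fractions `(n + 1) / (n + 2)` and `1 / (n + 2)`.
      have hsplit :
          Φ = Φ ∘ fun q : ℝ × E ↦ (q.1 / (n + 2), Φ (q.1 * ((n + 1) / (n + 2)), q.2)) := by
        ext q
        have hq : q.1 * ((n + 1) / (n + 2)) + q.1 / (n + 2) = q.1 := by field_simp; ring
        rw [Function.comp_apply, ← hΦ.map_add hK, hq]
      rw [hsplit]
      refine ContDiffAt.comp p (hΦ.contDiffAt_of_abs_mul_lt_one hK hf ?_)
        (ContDiffAt.prodMk (by fun_prop) ?_)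
      · rw [abs_div, abs_of_pos (by positivity : (0 : ℝ) < n + 2), div_mul_eq_mul_div,
          div_lt_one (by positivity)]
        linarith
      · refine (ih (p.1 * ((n + 1) / (n + 2)), p.2) ?_).comp p
          (f := fun q : ℝ × E ↦ (q.1 * ((n + 1) / (n + 2)), q.2)) (by fun_prop)
        rw [abs_mul, abs_of_pos (by positivity : (0 : ℝ) < (n + 1) / (n + 2)), mul_right_comm,
          ← mul_div_assoc, div_lt_iff₀ (by positivity)]
        nlinarith
  refine contDiff_iff_contDiffAt.mpr fun p ↦ ?_
  obtain ⟨n, hn⟩ := exists_nat_gt (|p.1| * K)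
  exact key n p (by linarith)

end IsFlow

end Flow

/-! ### Calculus on intervals -/

section Calculus

theorem le_of_hasDerivAt_nonneg {f f' : ℝ → ℝ} {a b : ℝ} (hab : a ≤ b)
    (hf : ∀ t ∈ Icc a b, HasDerivAt f (f' t) t) (hf' : ∀ t ∈ Icc a b, 0 ≤ f' t) : f a ≤ f b := by
  refine monotoneOn_of_hasDerivWithinAt_nonneg (f' := f') (convex_Icc a b)
    (fun t ht ↦ (hf t ht).continuousAt.continuousWithinAt) (fun t ht ↦ ?_) (fun t ht ↦ ?_)
    (left_mem_Icc.mpr hab) (right_mem_Icc.mpr hab) hab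
  · exact (hf t (interior_subset ht)).hasDerivWithinAt
  · exact hf' t (interior_subset ht)

theorem le_of_hasDerivAt_nonpos {f f' : ℝ → ℝ} {a b : ℝ} (hab : a ≤ b)
    (hf : ∀ t ∈ Icc a b, HasDerivAt f (f' t) t) (hf' : ∀ t ∈ Icc a b, f' t ≤ 0) : f b ≤ f a := by
  have hneg := le_of_hasDerivAt_nonneg hab (fun t ht ↦ (hf t ht).neg)
    fun t ht ↦ neg_nonneg.mpr (hf' t ht)
  simpa using hneg

theorem eq_of_hasDerivAt_zero {f : ℝ → ℝ} (hf : ∀ t, HasDerivAt f 0 t) (s t : ℝ) : f s = f t :=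
  is_const_of_deriv_eq_zero (fun r ↦ (hf r).differentiableAt) (fun r ↦ (hf r).deriv) s t

theorem exists_first_hit {f : ℝ → ℝ} (hf : Continuous f) {c T : ℝ} (hT : 0 ≤ T) (h0 : f 0 ≤ c)
    (h1 : c ≤ f T) : ∃ s ∈ Icc 0 T, f s = c ∧ ∀ t ∈ Icc 0 s, f t ≤ c := by
  have hcompact : IsCompact (Icc 0 T ∩ f ⁻¹' {c}) :=
    isCompact_Icc.inter_right (isClosed_singleton.preimage hf)
  have hne : (Icc 0 T ∩ f ⁻¹' {c}).Nonempty := intermediate_value_Icc hT hf.continuousOn ⟨h0, h1⟩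
  obtain ⟨s, ⟨hs, hsc⟩, hmin⟩ := hcompact.exists_isLeast hne
  refine ⟨s, hs, hsc, fun t ht ↦ ?_⟩
  by_contra! hct
  obtain ⟨r, hr, hrc⟩ := intermediate_value_Icc ht.1 hf.continuousOn ⟨h0, hct.le⟩
  have hsr : s ≤ r := hmin ⟨⟨hr.1, hr.2.trans (ht.2.trans hs.2)⟩, hrc⟩
  obtain rfl : r = t := le_antisymm hr.2 (ht.2.trans hsr)
  exact hct.ne' hrc

theorem pos_of_ne_zero_of_continuous {f : ℝ → ℝ} (hf : Continuous f) {T : ℝ}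
    (hne : ∀ t ∈ Icc 0 T, f t ≠ 0) (h0 : 0 < f 0) : ∀ t ∈ Icc 0 T, 0 < f t := by
  intro t ht
  by_contra! hneg
  obtain ⟨r, hr, hr0⟩ := intermediate_value_Icc' ht.1 hf.continuousOn ⟨hneg, h0.le⟩
  exact hne r ⟨hr.1, hr.2.trans ht.2⟩ hr0

theorem hasDerivAt_deriv_comm {F G : ℝ × ℝ → ℝ} (hF : ContDiff ℝ 2 F)
    (hG : ∀ t v, HasDerivAt (fun t ↦ F (t, v)) (G (t, v)) t) (t v : ℝ) :
    HasDerivAt (fun t ↦ deriv (fun v ↦ F (t, v)) v) (deriv (fun v ↦ G (t, v)) v) t := by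
  have hF1 : Differentiable ℝ F := hF.differentiable (by simp)
  have hF2 : Differentiable ℝ (fderiv ℝ F) :=
    (hF.fderiv_right (m := 1) le_rfl).differentiable (by simp)
  have line_t (t v : ℝ) : HasDerivAt (fun t ↦ (t, v)) ((1 : ℝ), (0 : ℝ)) t :=
    (hasDerivAt_id t).prodMk (hasDerivAt_const t v)
  have line_v (t v : ℝ) : HasDerivAt (fun v ↦ (t, v)) ((0 : ℝ), (1 : ℝ)) v :=
    (hasDerivAt_const v t).prodMk (hasDerivAt_id v)
  have hFv : (fun t ↦ deriv (fun v ↦ F (t, v)) v) = fun t ↦ fderiv ℝ F (t, v) (0, 1) := by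
    ext t
    exact ((hF1 (t, v)).hasFDerivAt.comp_hasDerivAt v (line_v t v)).deriv
  have hGt : (fun v ↦ G (t, v)) = fun v ↦ fderiv ℝ F (t, v) (1, 0) := by
    ext v
    exact (hG t v).unique ((hF1 (t, v)).hasFDerivAt.comp_hasDerivAt t (line_t t v))
  have hGv : deriv (fun v ↦ G (t, v)) v = fderiv ℝ (fderiv ℝ F) (t, v) (0, 1) (1, 0) := by
    rw [hGt]
    exact (((ContinuousLinearMap.apply ℝ ℝ ((1 : ℝ), (0 : ℝ))).hasFDerivAt.comp (t, v)
      (hF2 (t, v)).hasFDerivAt).comp_hasDerivAt v (line_v t v)).deriv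
  rw [hFv, hGv, (hF.contDiffAt.isSymmSndFDerivAt (by simp)).eq]
  exact ((ContinuousLinearMap.apply ℝ ℝ ((0 : ℝ), (1 : ℝ))).hasFDerivAt.comp (t, v)
    (hF2 (t, v)).hasFDerivAt).comp_hasDerivAt t (line_t t v)

end Calculus

/-! ### The pendulum flow -/

section PendulumFlow

open Real

/-- The pendulum equation `ẍ + sin x = 0` as a vector field on the phase plane. -/
noncomputable def pendField (z : ℝ × ℝ) : ℝ × ℝ := (z.2, -sin z.1)

theorem lipschitzWith_pendField : LipschitzWith 1 pendField := by
  have hsnd : LipschitzWith 1 fun z : ℝ × ℝ ↦ z.2 := LipschitzWith.prod_snd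
  have hsin : LipschitzWith 1 fun z : ℝ × ℝ ↦ -sin z.1 :=
    (lipschitzWith_sin.comp (LipschitzWith.prod_fst (α := ℝ) (β := ℝ))).neg.weaken (one_mul 1).le
  exact (hsnd.prodMk hsin).weaken (max_self 1).le

theorem contDiff_pendField {n : ℕ∞ω} : ContDiff ℝ n pendField := by
  unfold pendField
  fun_prop

/-- The flow of the pendulum equation on the phase plane. -/
noncomputable def pendFlow : ℝ × ℝ × ℝ → ℝ × ℝ :=
  (exists_isFlow lipschitzWith_pendField contDiff_pendField).choose

theorem isFlow_pendFlow : IsFlow pendField pendFlow :=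
  (exists_isFlow lipschitzWith_pendField contDiff_pendField).choose_spec

theorem contDiff_pendFlow : ContDiff ℝ ∞ pendFlow :=
  isFlow_pendFlow.contDiff lipschitzWith_pendField contDiff_pendField

/-- The angle at time `t` of the pendulum released at angle `a` with velocity `v`. -/
noncomputable def angle (a v t : ℝ) : ℝ := (pendFlow (t, a, v)).1

/-- The velocity at time `t` of the pendulum released at angle `a` with velocity `v`. -/
noncomputable def velocity (a v t : ℝ) : ℝ := (pendFlow (t, a, v)).2

/-- The Jacobi field along a pendulum orbit that measures the sensitivity of the angle to the
initial velocity. -/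
noncomputable def jacobi (a v t : ℝ) : ℝ := deriv (fun v ↦ angle a v t) v

/-- The sensitivity of the velocity to the initial velocity: the time derivative of `jacobi`. -/
noncomputable def jacobiDeriv (a v t : ℝ) : ℝ := deriv (fun v ↦ velocity a v t) v

/-- The pendulum energy of the phase point `(a, v)`. -/
noncomputable def energy (a v : ℝ) : ℝ := v ^ 2 / 2 + Vpend a

@[simp]
theorem angle_zero (a v : ℝ) : angle a v 0 = a := by simp [angle, isFlow_pendFlow.map_zero]

@[simp]
theorem velocity_zero (a v : ℝ) : velocity a v 0 = v := by
  simp [velocity, isFlow_pendFlow.map_zero]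

theorem contDiff_angle : ContDiff ℝ ∞ fun p : ℝ × ℝ × ℝ ↦ angle p.1 p.2.1 p.2.2 :=
  contDiff_fst.comp <| contDiff_pendFlow.comp
    (f := fun p : ℝ × ℝ × ℝ ↦ (p.2.2, p.1, p.2.1)) (by fun_prop)

theorem contDiff_velocity : ContDiff ℝ ∞ fun p : ℝ × ℝ × ℝ ↦ velocity p.1 p.2.1 p.2.2 :=
  contDiff_snd.comp <| contDiff_pendFlow.comp
    (f := fun p : ℝ × ℝ × ℝ ↦ (p.2.2, p.1, p.2.1)) (by fun_prop)

theorem hasDerivAt_angle (a v t : ℝ) : HasDerivAt (angle a v) (velocity a v t) t :=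
  (hasFDerivAt_fst (𝕜 := ℝ) (E := ℝ) (F := ℝ)).comp_hasDerivAt t
    (isFlow_pendFlow.hasDerivAt t (a, v))

theorem hasDerivAt_velocity (a v t : ℝ) : HasDerivAt (velocity a v) (-sin (angle a v t)) t :=
  (hasFDerivAt_snd (𝕜 := ℝ) (E := ℝ) (F := ℝ)).comp_hasDerivAt t
    (isFlow_pendFlow.hasDerivAt t (a, v))

theorem isPendSolOn_angle (a v : ℝ) (s : Set ℝ) : IsPendSolOn (angle a v) (velocity a v) s :=
  fun t _ ↦ ⟨hasDerivAt_angle a v t, hasDerivAt_velocity a v t⟩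

theorem continuous_angle (a v : ℝ) : Continuous (angle a v) :=
  continuous_iff_continuousAt.mpr fun t ↦ (hasDerivAt_angle a v t).continuousAt

theorem continuous_velocity (a v : ℝ) : Continuous (velocity a v) :=
  continuous_iff_continuousAt.mpr fun t ↦ (hasDerivAt_velocity a v t).continuousAt

theorem hasDerivAt_angle_jacobi (a v t : ℝ) :
    HasDerivAt (fun v ↦ angle a v t) (jacobi a v t) v := by
  have hsmooth : ContDiff ℝ ∞ fun v ↦ angle a v t :=
    contDiff_angle.comp (f := fun v : ℝ ↦ (a, v, t)) (by fun_prop)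
  exact (hsmooth.differentiable (by simp) v).hasDerivAt

theorem continuous_angle_initialVelocity (a t : ℝ) : Continuous fun v ↦ angle a v t :=
  continuous_iff_continuousAt.mpr fun v ↦ (hasDerivAt_angle_jacobi a v t).continuousAt

theorem hasDerivAt_angle_comp {a T n' : ℝ} {n : ℝ → ℝ} (hn : HasDerivAt n n' T) :
    HasDerivAt (fun t ↦ angle a (n t) t) (jacobi a (n T) T * n' + velocity a (n T) T) T := by
  have hangle : HasFDerivAt (fun p : ℝ × ℝ ↦ angle a p.1 p.2) _ (n T, T) :=
    ((contDiff_angle.comp (f := fun p : ℝ × ℝ ↦ (a, p)) (by fun_prop)).differentiable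
      (by simp) (n T, T)).hasFDerivAt
  set L := fderiv ℝ (fun p : ℝ × ℝ ↦ angle a p.1 p.2) (n T, T)
  have hjacobi : L (1, 0) = jacobi a (n T) T :=
    (hangle.comp_hasDerivAt (f := fun v ↦ (v, T)) (n T)
      ((hasDerivAt_id _).prodMk (hasDerivAt_const _ T))).unique (hasDerivAt_angle_jacobi a (n T) T)
  have hvelocity : L (0, 1) = velocity a (n T) T :=
    (hangle.comp_hasDerivAt (f := fun t ↦ (n T, t)) T
      ((hasDerivAt_const _ (n T)).prodMk (hasDerivAt_id _))).unique (hasDerivAt_angle a (n T) T)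
  refine (hangle.comp_hasDerivAt (f := fun t ↦ (n t, t)) T
    (hn.prodMk (hasDerivAt_id T))).congr_deriv ?_
  calc L (n', 1) = L (n' • (1, 0) + (0, 1)) := by simp
    _ = jacobi a (n T) T * n' + velocity a (n T) T := by
      rw [map_add, map_smul, hjacobi, hvelocity, smul_eq_mul, mul_comm]

@[simp]
theorem jacobi_zero (a v : ℝ) : jacobi a v 0 = 0 := by simp [jacobi]

@[simp]
theorem jacobiDeriv_zero (a v : ℝ) : jacobiDeriv a v 0 = 1 := by simp [jacobiDeriv]

theorem hasDerivAt_jacobi (a v t : ℝ) : HasDerivAt (jacobi a v) (jacobiDeriv a v t) t :=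
  hasDerivAt_deriv_comm (F := fun p ↦ angle a p.2 p.1) (G := fun p ↦ velocity a p.2 p.1)
    ((contDiff_angle.comp (f := fun p : ℝ × ℝ ↦ (a, p.2, p.1)) (by fun_prop)).of_le
      ENat.LEInfty.out)
    (fun t v ↦ hasDerivAt_angle a v t) t v

theorem hasDerivAt_jacobiDeriv (a v t : ℝ) :
    HasDerivAt (jacobiDeriv a v) (-cos (angle a v t) * jacobi a v t) t := by
  have hcomm := hasDerivAt_deriv_comm (F := fun p ↦ velocity a p.2 p.1)
    (G := fun p ↦ -sin (angle a p.2 p.1))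
    ((contDiff_velocity.comp (f := fun p : ℝ × ℝ ↦ (a, p.2, p.1)) (by fun_prop)).of_le
      ENat.LEInfty.out)
    (fun t v ↦ hasDerivAt_velocity a v t) t v
  have hsin := (hasDerivAt_angle_jacobi a v t).sin.neg
  exact hcomm.congr_deriv (hsin.deriv.trans (neg_mul _ _).symm)

theorem energy_angle_velocity (a v t : ℝ) :
    energy (angle a v t) (velocity a v t) = energy a v := by
  have hconst (t : ℝ) : HasDerivAt (fun t ↦ energy (angle a v t) (velocity a v t)) 0 t := by
    refine ((((hasDerivAt_velocity a v t).pow 2).div_const 2).add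
      ((hasDerivAt_angle a v t).cos.neg.sub_const 1)).congr_deriv ?_
    norm_num
    ring
  simpa using eq_of_hasDerivAt_zero hconst t 0

theorem velocity_sq (a v t : ℝ) :
    velocity a v t ^ 2 = 2 * energy a v + 2 * (1 + cos (angle a v t)) := by
  rw [← energy_angle_velocity a v t, energy, Vpend]
  ring

theorem wronskian_eq (a v t : ℝ) :
    jacobiDeriv a v t * velocity a v t + jacobi a v t * sin (angle a v t) = v := by
  have hconst (t : ℝ) : HasDerivAt
      (fun t ↦ jacobiDeriv a v t * velocity a v t + jacobi a v t * sin (angle a v t)) 0 t := by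
    refine (((hasDerivAt_jacobiDeriv a v t).mul (hasDerivAt_velocity a v t)).add
      ((hasDerivAt_jacobi a v t).mul (hasDerivAt_angle a v t).sin)).congr_deriv ?_
    ring
  simpa using eq_of_hasDerivAt_zero hconst t 0

theorem IsPendSolOn.eq_angle_and_eq_velocity_of_mem_Icc {x w : ℝ → ℝ} {T t : ℝ}
    (hx : IsPendSolOn x w (Icc 0 T)) (ht : t ∈ Icc 0 T) :
    x t = angle (x 0) (w 0) t ∧ w t = velocity (x 0) (w 0) t :=
  Prod.ext_iff.mp <| isFlow_pendFlow.eqOn_Icc_of_hasDerivAt lipschitzWith_pendField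
    (γ := fun t ↦ (x t, w t)) (fun t ht ↦ (hx t ht).1.prodMk (hx t ht).2) ht

theorem eq_angle_and_eq_velocity {x w : ℝ → ℝ} (hx : IsPendSolOn x w univ) (t : ℝ) :
    x t = angle (x 0) (w 0) t ∧ w t = velocity (x 0) (w 0) t :=
  Prod.ext_iff.mp <| isFlow_pendFlow.eq_of_hasDerivAt lipschitzWith_pendField
    (γ := fun t ↦ (x t, w t)) (fun t ↦ (hx t trivial).1.prodMk (hx t trivial).2) t

theorem angle_add (a v s t : ℝ) :
    angle a v (s + t) = angle (angle a v s) (velocity a v s) t := by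
  simp only [angle, velocity, isFlow_pendFlow.map_add lipschitzWith_pendField, Prod.mk.eta]

theorem IsPendSolOn.neg {x w : ℝ → ℝ} {s : Set ℝ} (hx : IsPendSolOn x w s) :
    IsPendSolOn (fun t ↦ -x t) (fun t ↦ -w t) s := fun t ht ↦
  ⟨(hx t ht).1.neg, (hx t ht).2.neg.congr_deriv (by simp)⟩

theorem IsPendSolOn.reverse {x w : ℝ → ℝ} {T : ℝ} (hx : IsPendSolOn x w (Icc 0 T)) :
    IsPendSolOn (fun t ↦ x (T - t)) (fun t ↦ -w (T - t)) (Icc 0 T) := fun t ht ↦ by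
  have hmem : T - t ∈ Icc 0 T := ⟨sub_nonneg.mpr ht.2, sub_le_self T ht.1⟩
  exact ⟨(hx _ hmem).1.comp_const_sub T t,
    ((hx _ hmem).2.comp_const_sub T t).neg.congr_deriv (neg_neg _)⟩

theorem velocity_neg_neg (a v t : ℝ) : velocity (-a) (-v) t = -velocity a v t := by
  simpa using (eq_angle_and_eq_velocity (isPendSolOn_angle a v univ).neg t).2.symm

theorem angle_eq_of_rest {a v t : ℝ} (hsin : sin (angle a v t) = 0) (hvel : velocity a v t = 0)
    (s : ℝ) : angle a v s = a := by
  have hrest (s : ℝ) : angle a v s = angle a v t := by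
    have hsol : IsPendSolOn (fun _ ↦ angle a v t) (fun _ ↦ 0) univ := fun r _ ↦
      ⟨hasDerivAt_const r _, by simpa [hsin] using hasDerivAt_const r (0 : ℝ)⟩
    rw [← add_sub_cancel t s, angle_add, hvel]
    exact (eq_angle_and_eq_velocity hsol (s - t)).1.symm
  rw [hrest s, ← hrest 0, angle_zero]

theorem angle_le_angle {a v s t : ℝ} (hst : s ≤ t) (hvel : ∀ r ∈ Icc s t, 0 ≤ velocity a v r) :
    angle a v s ≤ angle a v t :=
  le_of_hasDerivAt_nonneg hst (fun r _ ↦ hasDerivAt_angle a v r) hvel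

theorem angle_le_of_velocity_nonpos {a v t : ℝ} (ht : 0 ≤ t)
    (hvel : ∀ r ∈ Icc 0 t, velocity a v r ≤ 0) : angle a v t ≤ a := by
  simpa using le_of_hasDerivAt_nonpos ht (fun r _ ↦ hasDerivAt_angle a v r) hvel

theorem hasDerivAt_jacobi_div_velocity {a v t : ℝ} (hvel : velocity a v t ≠ 0) :
    HasDerivAt (fun t ↦ jacobi a v t / velocity a v t) (v / velocity a v t ^ 2) t := by
  refine ((hasDerivAt_jacobi a v t).div (hasDerivAt_velocity a v t) hvel).congr_deriv ?_
  rw [mul_neg, sub_neg_eq_add, wronskian_eq]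

theorem le_jacobi_div_velocity {a v T : ℝ} (hT : 0 ≤ T)
    (hvel : ∀ t ∈ Icc 0 T, 0 < velocity a v t) :
    v / (2 * energy a v + 4) * T ≤ jacobi a v T / velocity a v T := by
  have hv : 0 ≤ v := by simpa using (hvel 0 (left_mem_Icc.mpr hT)).le
  have hmono := le_of_hasDerivAt_nonneg hT (fun t ht ↦
    (hasDerivAt_jacobi_div_velocity (hvel t ht).ne').sub
      ((hasDerivAt_id t).const_mul (v / (2 * energy a v + 4)))) fun t ht ↦ by
    have hle : v / (2 * energy a v + 4) ≤ v / velocity a v t ^ 2 :=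
      div_le_div_of_nonneg_left hv (pow_pos (hvel t ht) 2)
        (by linarith [velocity_sq a v t, cos_le_one (angle a v t)])
    linarith
  simpa using hmono

theorem jacobi_div_velocity_le {a v T : ℝ} (hE : 0 < energy a v) (hT : 0 ≤ T)
    (hvel : ∀ t ∈ Icc 0 T, 0 < velocity a v t) :
    jacobi a v T / velocity a v T ≤ v / (2 * energy a v) * T := by
  have hv : 0 ≤ v := by simpa using (hvel 0 (left_mem_Icc.mpr hT)).le
  have hanti := le_of_hasDerivAt_nonpos hT (fun t ht ↦
    (hasDerivAt_jacobi_div_velocity (hvel t ht).ne').sub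
      ((hasDerivAt_id t).const_mul (v / (2 * energy a v)))) fun t _ ↦ by
    have hle : v / velocity a v t ^ 2 ≤ v / (2 * energy a v) :=
      div_le_div_of_nonneg_left hv (by linarith)
        (by linarith [velocity_sq a v t, neg_one_le_cos (angle a v t)])
    linarith
  simpa using hanti

theorem energy_sub_slope_mem {a v T : ℝ} (hT : 0 < T) :
    ((angle a v T - a) / T) ^ 2 / 2 - energy a v ∈ Icc 0 2 := by
  obtain ⟨s, _, hs⟩ := exists_hasDerivAt_eq_slope (angle a v) (velocity a v) hT
    (continuous_angle a v).continuousOn fun t _ ↦ hasDerivAt_angle a v t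
  rw [angle_zero, sub_zero] at hs
  rw [← hs, velocity_sq]
  constructor <;> linarith [neg_one_le_cos (angle a v s), cos_le_one (angle a v s)]

theorem le_angle_of_nonneg {a v t : ℝ} (ht : 0 ≤ t) : a + (v - t) * t ≤ angle a v t := by
  have hvel (s : ℝ) (hs : 0 ≤ s) : v - s ≤ velocity a v s := by
    have hmono := le_of_hasDerivAt_nonneg hs
      (fun r _ ↦ (hasDerivAt_velocity a v r).add (hasDerivAt_id r))
      fun r _ ↦ by linarith [sin_le_one (angle a v r)]
    simp only [Pi.add_apply, velocity_zero, id_eq, add_zero] at hmono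
    linarith
  have hmono := le_of_hasDerivAt_nonneg ht
    (fun r _ ↦ (hasDerivAt_angle a v r).sub ((hasDerivAt_id r).const_mul (v - t)))
    fun r hr ↦ by linarith [hvel r hr.1, hr.2]
  simp only [Pi.sub_apply, angle_zero, id_eq, mul_zero, sub_zero] at hmono
  linarith

end PendulumFlow

/-! ### The energy estimate for orbits of nonpositive energy -/

section EnergyEstimate

open Real

theorem lt_cos_one : (53 : ℝ) / 100 < cos 1 := by
  have hhalf : (7 : ℝ) / 8 ≤ cos (1 / 2) :=
    le_trans (by norm_num) (one_sub_sq_div_two_le_cos (x := 1 / 2))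
  have hdouble : cos 1 = 2 * cos (1 / 2) ^ 2 - 1 := by rw [← cos_two_mul]; norm_num
  nlinarith

theorem sin_one_lt : sin 1 < (106 : ℝ) / 125 := by
  nlinarith [sin_sq_add_cos_sq (1 : ℝ), lt_cos_one, sin_pos_of_pos_of_le_one one_pos le_rfl]

theorem cos_one_le_cos {a : ℝ} (ha : a ∈ Icc (-1) 1) : cos 1 ≤ cos a := by
  rw [← cos_abs a]
  exact cos_le_cos_of_nonneg_of_le_pi (abs_nonneg a) (by linarith [pi_gt_three]) (abs_le.mpr ha)

theorem cos_le_of_mem_Icc_pi {b : ℝ} (hb : b ∈ Icc (π - 1) (π + 1)) : cos b ≤ -(53 / 100) := by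
  have hcos := cos_one_le_cos (a := π - b) ⟨by linarith [hb.2], by linarith [hb.1]⟩
  rw [cos_pi_sub] at hcos
  linarith [lt_cos_one]

theorem sin_le_of_mem_Icc_pi {b : ℝ} (hb : b ∈ Icc (π - 1) (π + 1)) : sin b ≤ 106 / 125 := by
  rw [← sin_pi_sub]
  refine (sin_le_sin_of_le_of_le_pi_div_two ?_ ?_ ?_).trans sin_one_lt.le <;>
    linarith [pi_gt_three, hb.1, hb.2]

/-- The function `t ↦ (2/3 - 2E) y / v + t ψ`, where `y` is the Jacobi field, `ψ` the velocity
and `E` the energy of the orbit. Where `ψ < 0`, its positivity says that `y > 0` and that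
`2E - 2/3 < t v ψ / y`. -/
noncomputable def gap (a v t : ℝ) : ℝ :=
  (2 / 3 - 2 * energy a v) * (jacobi a v t / v) + t * velocity a v t

/-- The time derivative of `gap`. -/
noncomputable def gapDeriv (a v t : ℝ) : ℝ :=
  (2 / 3 - 2 * energy a v) * (jacobiDeriv a v t / v) + velocity a v t - t * sin (angle a v t)

theorem gap_zero (a v : ℝ) : gap a v 0 = 0 := by simp [gap]

theorem hasDerivAt_gap (a v t : ℝ) : HasDerivAt (gap a v) (gapDeriv a v t) t := by
  refine ((((hasDerivAt_jacobi a v t).div_const v).const_mul _).add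
    ((hasDerivAt_id t).mul (hasDerivAt_velocity a v t))).congr_deriv ?_
  rw [gapDeriv, id_eq]
  ring

theorem hasDerivAt_gapDeriv (a v t : ℝ) :
    HasDerivAt (gapDeriv a v) (-cos (angle a v t) * gap a v t - 2 * sin (angle a v t)) t := by
  refine (((((hasDerivAt_jacobiDeriv a v t).div_const v).const_mul _).add
    (hasDerivAt_velocity a v t)).sub
    ((hasDerivAt_id t).mul (hasDerivAt_angle a v t).sin)).congr_deriv ?_
  rw [gap, id_eq]
  ring

theorem gapDeriv_mul_velocity_add {a v : ℝ} (hv : v ≠ 0) (t : ℝ) :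
    gapDeriv a v t * velocity a v t + gap a v t * sin (angle a v t)
      = 8 / 3 + 2 * cos (angle a v t) := by
  have hw : jacobiDeriv a v t / v * velocity a v t + jacobi a v t / v * sin (angle a v t) = 1 := by
    rw [div_mul_eq_mul_div, div_mul_eq_mul_div, ← add_div, wronskian_eq, div_self hv]
  rw [gapDeriv, gap]
  linear_combination (2 / 3 - 2 * energy a v) * hw + velocity_sq a v t

theorem hasDerivAt_gap_div_velocity {a v t : ℝ} (hv : v ≠ 0) (hvel : velocity a v t ≠ 0) :
    HasDerivAt (fun t ↦ gap a v t / velocity a v t)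
      ((8 / 3 + 2 * cos (angle a v t)) / velocity a v t ^ 2) t := by
  refine ((hasDerivAt_gap a v t).div (hasDerivAt_velocity a v t) hvel).congr_deriv ?_
  rw [← gapDeriv_mul_velocity_add hv]
  ring

theorem hasDerivAt_sin_div_velocity {a v t : ℝ} (hvel : velocity a v t ≠ 0) :
    HasDerivAt (fun t ↦ sin (angle a v t) / velocity a v t)
      ((1 + (2 * energy a v + 2) * cos (angle a v t) + cos (angle a v t) ^ 2)
        / velocity a v t ^ 2) t := by
  refine ((hasDerivAt_angle a v t).sin.div (hasDerivAt_velocity a v t) hvel).congr_deriv ?_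
  congr 1
  linear_combination cos (angle a v t) * velocity_sq a v t + sin_sq_add_cos_sq (angle a v t)

theorem hasDerivAt_gapDeriv_div_sin {a v t : ℝ} (hv : v ≠ 0) (hsin : sin (angle a v t) ≠ 0) :
    HasDerivAt (fun t ↦ gapDeriv a v t / sin (angle a v t))
      (-(2 + 8 / 3 * cos (angle a v t)) / sin (angle a v t) ^ 2) t := by
  refine ((hasDerivAt_gapDeriv a v t).div (hasDerivAt_angle a v t).sin hsin).congr_deriv ?_
  congr 1
  linear_combination (-cos (angle a v t)) * gapDeriv_mul_velocity_add hv t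
    - 2 * sin_sq_add_cos_sq (angle a v t)

theorem cube_velocity_le {u c s : ℝ} (hu : u ∈ Icc (53 / 50) 2) (hc : c ∈ Icc 0 1)
    (hsq : s ^ 2 = u + 2 * c) : 16 / 25 * s ^ 3 ≤ 8 / 3 * (u + c) - 2 := by
  -- Since `s ≤ (s² + (9/5)²) / (18/5)`, it suffices to bound a quadratic polynomial in `u`, `c`.
  have hcube : s ^ 3 ≤ (u + 2 * c) * ((u + 2 * c + 81 / 25) / (18 / 5)) := by
    rw [pow_succ, hsq]
    exact mul_le_mul_of_nonneg_left (by linarith [sq_nonneg (s - 9 / 5)])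
      (by linarith [hu.1, hc.1])
  nlinarith [mul_nonneg hc.1 (sub_nonneg.mpr hc.2), mul_nonneg (sub_nonneg.mpr hu.1)
    (sub_nonneg.mpr hu.2), mul_nonneg (sub_nonneg.mpr hu.1) (sub_nonneg.mpr hc.2),
    mul_nonneg (sub_nonneg.mpr hu.2) hc.1, hu.1, hu.2, hc.1, hc.2]

theorem two_add_mul_cos_le {c s : ℝ} (hc : c ≤ 0) (hs : 0 < s) (hsc : s ^ 2 + c ^ 2 = 1) :
    2 + 8 / 3 * c ≤ s ^ 3 * (2 + 15 / 8 * c) := by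
  have hc1 : -1 ≤ c := by nlinarith
  -- On the unit interval `s ≥ s² (3 - s²) / 2`, which removes the square root from the claim.
  have hcube : (1 - c ^ 2) ^ 2 * (2 + c ^ 2) / 2 ≤ s ^ 3 := by
    have hsq : 1 - c ^ 2 = s ^ 2 := by linarith
    have hquad : 2 + c ^ 2 = 3 - s ^ 2 := by linarith
    rw [hsq, hquad]
    nlinarith [mul_nonneg (pow_pos hs 3).le
      (mul_nonneg (sq_nonneg (s - 1)) (by linarith : 0 ≤ s + 2))]
  refine le_trans ?_ (mul_le_mul_of_nonneg_right hcube (by linarith))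
  have htangent : -(5 / 16 * c) - 1 / 8 ≤ -c ^ 5 := by
    nlinarith [mul_nonneg (sq_nonneg (c + 1 / 2))
      (by nlinarith [pow_nonneg (neg_nonneg.mpr hc) 3] : 0 ≤ -c ^ 3 + c ^ 2 - 3 / 4 * c + 1 / 2)]
  have hquad : 0 ≤ 19 / 24 + 3 * c + 45 / 16 * c ^ 2 - c ^ 5 * (1 + 15 / 16 * c) := by
    nlinarith [mul_le_mul_of_nonneg_right htangent (by linarith : 0 ≤ 1 + 15 / 16 * c),
      sq_nonneg (c + 51 / 100)]
  nlinarith [mul_nonneg (neg_nonneg.mpr hc) hquad]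

theorem neg_le_add_mul_div_sub {v σ : ℝ} (hv : 0 < v) (hlo : 53 / 25 ≤ v ^ 2) (hhi : v ^ 2 ≤ 4)
    (hσ : -(106 / 125) ≤ σ) : -(19 / 50) ≤ 16 / 25 + σ * (8 / 3 / v - 16 / 25) := by
  have hv2 : v ≤ 2 := by nlinarith
  have hv1 : 1.456 ≤ v := by nlinarith
  have hfrac : 8 / 3 / v - 16 / 25 ∈ Icc 0 1.1916 := by
    constructor
    · rw [sub_nonneg, le_div_iff₀ hv]
      linarith
    · rw [tsub_le_iff_right, div_le_iff₀ hv]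
      linarith
  nlinarith [mul_le_mul_of_nonneg_right hσ hfrac.1, hfrac.2]

theorem gap_div_velocity_le {a v t : ℝ} (hE : energy a v + 1 ∈ Icc (cos 1) 1) (ht : 0 ≤ t)
    (hvel : ∀ s ∈ Icc 0 t, 0 < velocity a v s)
    (hangle : ∀ s ∈ Icc 0 t, angle a v s ∈ Icc (-(π / 2)) (π / 2)) :
    gap a v t / velocity a v t
      ≤ 8 / 3 * (sin (angle a v t) / velocity a v t - sin a / v)
        - 16 / 25 * (sin (angle a v t) - sin a) := by
  have hv : 0 < v := by simpa using hvel 0 (left_mem_Icc.mpr ht)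
  have hanti := le_of_hasDerivAt_nonpos ht
    (fun s hs ↦ ((hasDerivAt_gap_div_velocity hv.ne' (hvel s hs).ne').sub
      ((hasDerivAt_sin_div_velocity (hvel s hs).ne').const_mul (8 / 3))).add
      ((hasDerivAt_angle a v s).sin.const_mul (16 / 25))) fun s hs ↦ by
    have hψ := hvel s hs
    have hcos : cos (angle a v s) ∈ Icc 0 1 := ⟨cos_nonneg_of_mem_Icc (hangle s hs), cos_le_one _⟩
    have hcube := cube_velocity_le (u := 2 * energy a v + 2)
      ⟨by linarith [lt_cos_one, hE.1], by linarith [hE.2]⟩ hcos (by rw [velocity_sq]; ring)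
    have hfactor : (8 / 3 + 2 * cos (angle a v s)) / velocity a v s ^ 2 - 8 / 3 *
        ((1 + (2 * energy a v + 2) * cos (angle a v s) + cos (angle a v s) ^ 2)
          / velocity a v s ^ 2) + 16 / 25 * (cos (angle a v s) * velocity a v s)
        = -(cos (angle a v s) * (8 / 3 * (2 * energy a v + 2 + cos (angle a v s)) - 2
          - 16 / 25 * velocity a v s ^ 3) / velocity a v s ^ 2) := by
      field_simp
      ring
    rw [hfactor, neg_nonpos]
    exact div_nonneg (mul_nonneg hcos.1 (by linarith)) (sq_nonneg _)
  simp only [Pi.add_apply, Pi.sub_apply, angle_zero, velocity_zero, gap_zero, zero_div] at hanti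
  linarith

theorem le_gapDeriv_of_angle_eq_pi_div_two {a v t : ℝ} (ha : a ∈ Icc (-1) 1)
    (hE : energy a v + 1 ∈ Icc (cos 1) 1) (ht : 0 ≤ t)
    (hvel : ∀ s ∈ Icc 0 t, 0 < velocity a v s)
    (hangle : ∀ s ∈ Icc 0 t, angle a v s ∈ Icc (-(π / 2)) (π / 2)) (hend : angle a v t = π / 2) :
    -(19 / 50) ≤ gapDeriv a v t := by
  have hv : 0 < v := by simpa using hvel 0 (left_mem_Icc.mpr ht)
  have hψ := hvel t (right_mem_Icc.mpr ht)
  have hgap := gap_div_velocity_le hE ht hvel hangle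
  have hid := gapDeriv_mul_velocity_add (a := a) hv.ne' t
  rw [hend, sin_pi_div_two] at hgap
  rw [hend, cos_pi_div_two, sin_pi_div_two] at hid
  have hsq : v ^ 2 = 2 * (energy a v + 1) + 2 * cos a := by rw [energy, Vpend]; ring
  have hcos := cos_one_le_cos ha
  have hsin : -(106 / 125) ≤ sin a := by
    have hmono : sin (-1) ≤ sin a :=
      sin_le_sin_of_le_of_le_pi_div_two (by linarith [pi_gt_three])
        (by linarith [pi_gt_three, ha.2]) ha.1
    rw [sin_neg] at hmono
    linarith [sin_one_lt]
  calc -(19 / 50) ≤ 16 / 25 + sin a * (8 / 3 / v - 16 / 25) :=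
        neg_le_add_mul_div_sub hv (by linarith [lt_cos_one, hE.1])
          (by linarith [cos_le_one a, hE.2]) hsin
    _ = 8 / 3 * (sin a / v) + 16 / 25 * (1 - sin a) := by ring
    _ ≤ 8 / 3 * (1 / velocity a v t) - gap a v t / velocity a v t := by linarith
    _ = gapDeriv a v t := by
        rw [mul_one_div, ← sub_div, div_eq_iff hψ.ne']
        linarith

theorem gapDeriv_div_sin_sub_le {a v s t : ℝ} (hst : s ≤ t) (hv : v ≠ 0)
    (hangle : ∀ r ∈ Icc s t, angle a v r ∈ Ico (π / 2) π) :
    gapDeriv a v s / sin (angle a v s)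
        - velocity a v s * (3 / 4 - 5 / 4 * energy a v + 5 / 8 * cos (angle a v s))
      ≤ gapDeriv a v t / sin (angle a v t)
        - velocity a v t * (3 / 4 - 5 / 4 * energy a v + 5 / 8 * cos (angle a v t)) := by
  have hsin (r : ℝ) (hr : r ∈ Icc s t) : 0 < sin (angle a v r) :=
    sin_pos_of_pos_of_lt_pi (by linarith [pi_pos, (hangle r hr).1]) (hangle r hr).2
  refine le_of_hasDerivAt_nonneg hst
    (fun r hr ↦ (hasDerivAt_gapDeriv_div_sin hv (hsin r hr).ne').sub
      ((hasDerivAt_velocity a v r).mul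
        (((hasDerivAt_angle a v r).cos.const_mul (5 / 8)).const_add _))) fun r hr ↦ ?_
  have hcos : cos (angle a v r) ≤ 0 :=
    cos_nonpos_of_pi_div_two_le_of_le (hangle r hr).1 (by linarith [pi_pos, (hangle r hr).2])
  have hkey := two_add_mul_cos_le hcos (hsin r hr) (sin_sq_add_cos_sq _)
  have hdiv : (2 + 8 / 3 * cos (angle a v r)) / sin (angle a v r) ^ 2
      ≤ sin (angle a v r) * (2 + 15 / 8 * cos (angle a v r)) := by
    rw [div_le_iff₀ (pow_pos (hsin r hr) 2)]
    linarith
  rw [neg_div]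
  linear_combination hdiv - 5 / 8 * sin (angle a v r) * velocity_sq a v r

theorem arrival_polynomial_lt {u r w : ℝ} (hr : 0 < r) (hw : 0 < w) (hru : r ^ 2 = u) (hu : u ≤ 2)
    (hwu : w ^ 2 ≤ u - 53 / 50) :
    106 / 125 * w * (19 / 50 + r * (2 - 5 / 8 * u) + w * (2 - 5 / 8 * u + 5 / 16 * (w ^ 2 - u)))
      < 8 / 3 - u + w ^ 2 := by
  have hr' : r * (2 - 5 / 8 * u) ≤ 107 / 100 + 62 / 100 * (2 - u) := by
    nlinarith [mul_nonneg hr.le (sq_nonneg (r - 1.414)), sq_nonneg (r - 1.414)]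
  suffices h : 0 < 8 / 3 - u + w ^ 2 - 106 / 125 * w * (19 / 50 + (107 / 100 + 62 / 100 * (2 - u))
      + w * (2 - 5 / 8 * u + 5 / 16 * (w ^ 2 - u))) by nlinarith
  -- The bound is affine in `2 - u ∈ [0, 47/50 - w²]`, so it suffices to check the two endpoints.
  have hleft : 0 < 2 / 3 + w ^ 2 - 106 / 125 * w * (29 / 20 + w * (1 / 8 + 5 / 16 * w ^ 2)) := by
    nlinarith [sq_nonneg (w - 946 / 1000),
      mul_nonneg (sq_nonneg w) (by linarith : 0 ≤ 47 / 50 - w ^ 2)]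
  have hright : 0 < 2 / 3 + 47 / 50 - 106 / 125 * w * (29 / 20 + 62 / 100 * (47 / 50 - w ^ 2)
      + w * (1 / 8 + 15 / 16 * (47 / 50 - w ^ 2) + 5 / 16 * w ^ 2)) := by
    nlinarith [mul_nonneg (sq_nonneg w) (sq_nonneg (w - 96 / 100)),
      mul_nonneg hw.le (sq_nonneg (w - 96 / 100)), sq_nonneg (w - 96 / 100)]
  rcases le_total 0 (1 - 106 / 125 * w * (62 / 100 + 15 / 16 * w)) with hslope | hslope
  · nlinarith [mul_nonneg hslope (sub_nonneg.mpr hu)]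
  · nlinarith [mul_nonneg (neg_nonneg.mpr hslope)
      (by linarith : 0 ≤ 47 / 50 - w ^ 2 - (2 - u))]

theorem gap_pos {a v s t : ℝ} (ha : a ∈ Icc (-1) 1) (hE : energy a v + 1 ∈ Icc (cos 1) 1)
    (hs : 0 ≤ s) (hst : s ≤ t) (hvel : ∀ r ∈ Icc 0 s, 0 < velocity a v r)
    (hlow : ∀ r ∈ Icc 0 s, angle a v r ∈ Icc (-(π / 2)) (π / 2)) (hmid : angle a v s = π / 2)
    (hhigh : ∀ r ∈ Icc s t, angle a v r ∈ Ico (π / 2) π) (hend : π - 1 ≤ angle a v t)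
    (hback : velocity a v t < 0) : 0 < gap a v t := by
  have hv : 0 < v := by simpa using hvel 0 (left_mem_Icc.mpr hs)
  have hb : angle a v t < π := (hhigh t (right_mem_Icc.mpr hst)).2
  have hsin : 0 < sin (angle a v t) := sin_pos_of_pos_of_lt_pi (by linarith [pi_gt_three]) hb
  have hsin_le := sin_le_of_mem_Icc_pi ⟨hend, by linarith⟩
  have hcos := cos_le_of_mem_Icc_pi ⟨hend, by linarith⟩
  have hsq_s := velocity_sq a v s
  have hsq_t := velocity_sq a v t
  rw [hmid, cos_pi_div_two] at hsq_s
  have hstart := le_gapDeriv_of_angle_eq_pi_div_two ha hE hs hvel hlow hmid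
  have hmono := gapDeriv_div_sin_sub_le hst hv.ne' hhigh
  rw [hmid, sin_pi_div_two, cos_pi_div_two, div_one] at hmono
  set X := 19 / 50 + velocity a v s * (3 / 4 - 5 / 4 * energy a v)
    + -velocity a v t * (3 / 4 - 5 / 4 * energy a v + 5 / 8 * cos (angle a v t)) with hX
  have hX0 : 0 ≤ X := by
    have hψ := hvel s (right_mem_Icc.mpr hs)
    have hcos' := neg_one_le_cos (angle a v t)
    exact add_nonneg (add_nonneg (by positivity) (mul_nonneg hψ.le (by linarith [hE.2])))
      (mul_nonneg (neg_nonneg.mpr hback.le) (by linarith [hE.2]))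
  have hslope : -X * sin (angle a v t) ≤ gapDeriv a v t := by
    rw [← le_div_iff₀ hsin]
    linarith
  have hpoly := arrival_polynomial_lt (u := 2 * energy a v + 2) (hvel s (right_mem_Icc.mpr hs))
    (neg_pos.mpr hback) (by linarith) (by linarith [hE.2]) (by linarith)
  have hpoly' : 106 / 125 * -velocity a v t * X < 8 / 3 + 2 * cos (angle a v t) := by
    convert hpoly using 1
    · rw [neg_sq, hsq_t, hX]
      ring
    · rw [neg_sq, hsq_t]
      ring
  refine pos_of_mul_pos_left ?_ hsin.le
  calc 0 < 8 / 3 + 2 * cos (angle a v t) - 106 / 125 * -velocity a v t * X := sub_pos.mpr hpoly'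
    _ ≤ 8 / 3 + 2 * cos (angle a v t) + -velocity a v t * gapDeriv a v t := by
        nlinarith [mul_le_mul_of_nonneg_left hslope (neg_nonneg.mpr hback.le),
          mul_le_mul_of_nonneg_left hsin_le (mul_nonneg (neg_nonneg.mpr hback.le) hX0)]
    _ = gap a v t * sin (angle a v t) := by
        linear_combination -gapDeriv_mul_velocity_add hv.ne' t

end EnergyEstimate

/-! ### Shots with positive energy -/

section PositiveEnergy

/-- The quantity `v ψ / y`: minus the derivative, with respect to the transit time `t`, of the
energy of the shot from `a` to a fixed target. -/
noncomputable def energyDecay (a v t : ℝ) : ℝ := v * velocity a v t / jacobi a v t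

theorem jacobi_pos_of_velocity_pos {a v T : ℝ} (hT : 0 < T)
    (hvel : ∀ t ∈ Icc 0 T, 0 < velocity a v t) : 0 < jacobi a v T := by
  have hv : 0 < v := by simpa using hvel 0 (left_mem_Icc.mpr hT.le)
  have hE : 0 < 2 * energy a v + 4 := by
    have hsq := velocity_sq a v 0
    rw [velocity_zero, angle_zero] at hsq
    linarith [pow_pos hv 2, Real.cos_le_one a]
  refine (div_pos_iff_of_pos_right (hvel T (right_mem_Icc.mpr hT.le))).mp ?_
  exact (mul_pos (div_pos hv hE) hT).trans_le (le_jacobi_div_velocity hT.le hvel)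

theorem velocity_pos_of_energy_pos {a v t : ℝ} (hE : 0 < energy a v) (hv : 0 < v) (ht : 0 ≤ t) :
    0 < velocity a v t := by
  refine pos_of_ne_zero_of_continuous (continuous_velocity a v) (fun s _ h0 ↦ ?_)
    (by rwa [velocity_zero]) t (right_mem_Icc.mpr ht)
  have hsq := velocity_sq a v s
  rw [h0] at hsq
  linarith [Real.neg_one_le_cos (angle a v s)]

theorem energy_neg (a v : ℝ) : energy (-a) (-v) = energy a v := by simp [energy, Vpend]

theorem pos_of_energy_pos {a v T : ℝ} (hE : 0 < energy a v) (hT : 0 ≤ T) (hab : a < angle a v T) :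
    0 < v := by
  by_contra! hv
  have hv0 : v ≠ 0 := by
    rintro rfl
    simp only [energy, Vpend] at hE
    linarith [Real.neg_one_le_cos a]
  refine hab.not_ge (angle_le_of_velocity_nonpos hT fun t ht ↦ ?_)
  have hneg := velocity_pos_of_energy_pos (energy_neg a v ▸ hE) (neg_pos.mpr (hv.lt_of_ne hv0)) ht.1
  linarith [velocity_neg_neg a v t]

theorem jacobi_pos_of_energy_pos {a v T : ℝ} (hE : 0 < energy a v) (hT : 0 < T) (hv : 0 < v) :
    0 < jacobi a v T :=
  jacobi_pos_of_velocity_pos hT fun _ ht ↦ velocity_pos_of_energy_pos hE hv ht.1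

theorem two_mul_energy_le_mul_energyDecay {a v T : ℝ} (hE : 0 < energy a v) (hT : 0 < T)
    (hv : 0 < v) : 2 * energy a v ≤ T * energyDecay a v T := by
  have hvel (t : ℝ) (ht : t ∈ Icc 0 T) := velocity_pos_of_energy_pos hE hv ht.1
  have hle := jacobi_div_velocity_le hE hT.le hvel
  rw [div_le_iff₀ (hvel T (right_mem_Icc.mpr hT.le)), div_mul_eq_mul_div, div_mul_eq_mul_div,
    le_div_iff₀ (by linarith)] at hle
  rw [energyDecay, ← mul_div_assoc, le_div_iff₀ (jacobi_pos_of_energy_pos hE hT hv)]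
  linarith

theorem angle_mem_Icc_of_energy_pos {a v T t : ℝ} (hE : 0 < energy a v) (hv : 0 < v)
    (ht : t ∈ Icc 0 T) : angle a v t ∈ Icc a (angle a v T) := by
  have hvel (s : ℝ) (hs : 0 ≤ s) : 0 ≤ velocity a v s := (velocity_pos_of_energy_pos hE hv hs).le
  constructor
  · simpa using angle_le_angle ht.1 fun s hs ↦ hvel s hs.1
  · exact angle_le_angle ht.2 fun s hs ↦ hvel s (ht.1.trans hs.1)

theorem strictMonoOn_angle {a T : ℝ} {A : Set ℝ} (hA : A.OrdConnected)
    (hjacobi : ∀ v ∈ A, 0 < jacobi a v T) : StrictMonoOn (fun v ↦ angle a v T) A :=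
  strictMonoOn_of_deriv_pos hA.convex (continuous_angle_initialVelocity a T).continuousOn
    fun v hv ↦ hjacobi v (interior_subset hv)

theorem le_angle_of_fast {a b T : ℝ} (hT : 0 < T) : b ≤ angle a (T + (b - a) / T) T := by
  refine le_trans (le_of_eq ?_) (le_angle_of_nonneg hT.le)
  field_simp
  ring

end PositiveEnergy

/-! ### Shots across the top -/

section Crossing

open Real

theorem energy_pos_of_crossing {a v T : ℝ} {k : ℤ} (hT : 0 ≤ T) (hab : a < angle a v T)
    (hk : (2 * k + 1) * π ∈ Icc a (angle a v T)) : 0 < energy a v := by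
  obtain ⟨s, -, hs⟩ := intermediate_value_Icc hT (continuous_angle a v).continuousOn
    (by simpa using hk)
  have htop : (2 * (k : ℝ) + 1) * π = π + k * (2 * π) := by ring
  have hcos : cos (angle a v s) = -1 := by rw [hs, htop, cos_add_int_mul_two_pi, cos_pi]
  have hsin : sin (angle a v s) = 0 := by rw [hs, htop, sin_add_int_mul_two_pi, sin_pi]
  have hvel : velocity a v s ≠ 0 := fun h0 ↦ hab.ne' (angle_eq_of_rest hsin h0 T)
  have hsq := velocity_sq a v s
  rw [hcos] at hsq
  linarith [sq_pos_iff.mpr hvel]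

theorem existsUnique_crossing {a b T : ℝ} {k : ℤ} (hT : 0 < T) (hab : a < b)
    (hk : (2 * k + 1) * π ∈ Icc a b) : ∃! v, angle a v T = b := by
  have henergy (v : ℝ) (hv : b ≤ angle a v T) : 0 < energy a v :=
    energy_pos_of_crossing hT.le (hab.trans_le hv) ⟨hk.1, hk.2.trans hv⟩
  have hslow : angle a 0 T ≤ b := by
    by_contra! hlt
    exact (pos_of_energy_pos (henergy 0 hlt.le) hT.le (hab.trans hlt)).false
  have hfast : 0 ≤ T + (b - a) / T := add_nonneg hT.le (div_nonneg (sub_nonneg.mpr hab.le) hT.le)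
  obtain ⟨v, -, hv⟩ := intermediate_value_Icc hfast
    (continuous_angle_initialVelocity a T).continuousOn ⟨hslow, le_angle_of_fast hT⟩
  have hmono : StrictMonoOn (fun v ↦ angle a v T) {v | 0 < v ∧ 0 < energy a v} := by
    refine strictMonoOn_angle ⟨fun x hx y _ z hz ↦ ?_⟩
      fun v hv ↦ jacobi_pos_of_energy_pos hv.2 hT hv.1
    have hz0 : 0 < z := hx.1.trans_le hz.1
    refine ⟨hz0, hx.2.trans_le ?_⟩
    simp only [energy]
    gcongr
    exacts [hx.1.le, hz.1]
  have hmem (w : ℝ) (hw : angle a w T = b) : 0 < w ∧ 0 < energy a w :=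
    ⟨pos_of_energy_pos (henergy w hw.ge) hT.le (by rwa [hw]), henergy w hw.ge⟩
  exact ⟨v, hv, fun w hw ↦ hmono.injOn (hmem w hw) (hmem v hv) (hw.trans hv.symm)⟩

end Crossing

/-! ### Shots that climb to the barrier -/

/-- A shot released in `[-1, 1]` that is at angle at least `π - 1` at time `T`, having stayed
above `-2` in the meantime. -/
structure IsBarrierShot (a v T : ℝ) : Prop where
  start_mem : a ∈ Icc (-1) 1
  neg_two_lt : ∀ t ∈ Icc 0 T, -2 < angle a v t
  le_end : π - 1 ≤ angle a v T

section Barrier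

open Real

theorem angle_lt_pi_of_energy_nonpos {a v t : ℝ} (hE : energy a v ≤ 0) (ha : a < π) (ht : 0 ≤ t) :
    angle a v t < π := by
  by_contra! hge
  have hcross := energy_pos_of_crossing (v := v) (k := 0) ht (ha.trans_le hge)
    (by simpa using ⟨ha.le, hge⟩)
  exact hE.not_gt hcross

theorem cos_one_le_energy_add_one {a v T : ℝ} (hT : 0 ≤ T) (ha : a ≤ π)
    (hb : π - 1 ≤ angle a v T) : cos 1 ≤ energy a v + 1 := by
  obtain ⟨s, hs⟩ : ∃ s, angle a v s ∈ Icc (π - 1) π := by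
    rcases le_total (angle a v T) π with hle | hge
    · exact ⟨T, hb, hle⟩
    · obtain ⟨s, -, hs⟩ := intermediate_value_Icc hT (continuous_angle a v).continuousOn
        (by simpa using ⟨ha, hge⟩)
      exact ⟨s, hs ▸ ⟨by linarith, le_rfl⟩⟩
  have hcos := cos_one_le_cos (a := π - angle a v s) ⟨by linarith [hs.2], by linarith [hs.1]⟩
  rw [cos_pi_sub] at hcos
  linarith [velocity_sq a v s, sq_nonneg (velocity a v s)]

theorem velocity_ne_zero_of_mem_Icc {a v t : ℝ} (hE : cos 1 ≤ energy a v + 1)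
    (ht : angle a v t ∈ Icc (-2) (π / 2)) : velocity a v t ≠ 0 := fun h0 ↦ by
  have hcos : cos (π - 1) < cos (angle a v t) := by
    rw [← cos_abs (angle a v t)]
    refine cos_lt_cos_of_nonneg_of_le_pi (abs_nonneg _) (by linarith) (abs_lt.mpr ?_)
    constructor <;> linarith [pi_gt_d2, ht.1, ht.2]
  rw [cos_pi_sub] at hcos
  have hsq := velocity_sq a v t
  rw [h0] at hsq
  linarith

theorem jacobi_pos_and_lt_energyDecay_of_gap_pos {a v T : ℝ} (hE : energy a v ≤ 0) (hv : 0 < v)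
    (hT : 0 ≤ T) (hneg : velocity a v T ≤ 0) (hgap : 0 < gap a v T) :
    0 < jacobi a v T ∧ 2 * energy a v - 2 / 3 < T * energyDecay a v T := by
  have hE' : 0 < 2 / 3 - 2 * energy a v := by linarith
  rw [gap] at hgap
  have hjv : 0 < jacobi a v T / v :=
    pos_of_mul_pos_right (by linarith [mul_nonpos_of_nonneg_of_nonpos hT hneg]) hE'.le
  have hj : 0 < jacobi a v T := (div_pos_iff_of_pos_right hv).mp hjv
  refine ⟨hj, sub_pos.mp ?_⟩
  calc 0 < v / jacobi a v T
        * ((2 / 3 - 2 * energy a v) * (jacobi a v T / v) + T * velocity a v T) :=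
      mul_pos (div_pos hv hj) hgap
    _ = T * energyDecay a v T - (2 * energy a v - 2 / 3) := by
      rw [energyDecay]
      field_simp
      ring

namespace IsBarrierShot

variable {a v T : ℝ}

theorem start_lt_end (h : IsBarrierShot a v T) : a < angle a v T := by
  linarith [h.start_mem.2, h.le_end, pi_gt_three]

theorem cos_one_le (h : IsBarrierShot a v T) (hT : 0 ≤ T) : cos 1 ≤ energy a v + 1 :=
  cos_one_le_energy_add_one hT (by linarith [h.start_mem.2, pi_gt_three]) h.le_end

theorem velocity_ne_zero (h : IsBarrierShot a v T) {t : ℝ} (ht : t ∈ Icc 0 T)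
    (hle : angle a v t ≤ π / 2) : velocity a v t ≠ 0 :=
  velocity_ne_zero_of_mem_Icc (h.cos_one_le (ht.1.trans ht.2)) ⟨(h.neg_two_lt t ht).le, hle⟩

theorem initialVelocity_pos (h : IsBarrierShot a v T) (hT : 0 ≤ T) : 0 < v := by
  have ha : a ≤ π / 2 := by linarith [h.start_mem.2, pi_gt_three]
  by_contra! hv
  have hvel (t : ℝ) (ht : t ∈ Icc 0 T) : velocity a v t ≤ 0 := by
    by_contra! hpos
    obtain ⟨s, hs, hs0, hbefore⟩ := exists_first_hit (continuous_velocity a v) ht.1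
      (by rwa [velocity_zero]) hpos.le
    exact h.velocity_ne_zero ⟨hs.1, hs.2.trans ht.2⟩
      ((angle_le_of_velocity_nonpos hs.1 hbefore).trans ha) hs0
  exact (h.start_lt_end).not_ge (angle_le_of_velocity_nonpos hT hvel)

theorem exists_ascent (h : IsBarrierShot a v T) (hT : 0 ≤ T) :
    ∃ s ∈ Icc 0 T, angle a v s = π / 2 ∧
      ∀ t ∈ Icc 0 s, angle a v t ∈ Icc a (π / 2) ∧ 0 < velocity a v t := by
  obtain ⟨s, hs, hmid, hbefore⟩ := exists_first_hit (continuous_angle a v) (c := π / 2) hT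
    (by rw [angle_zero]; linarith [h.start_mem.2, pi_gt_three])
    (by linarith [h.le_end, pi_gt_three])
  have hvel := pos_of_ne_zero_of_continuous (continuous_velocity a v)
    (fun t ht ↦ h.velocity_ne_zero ⟨ht.1, ht.2.trans hs.2⟩ (hbefore t ht))
    (by rw [velocity_zero]; exact h.initialVelocity_pos hT)
  refine ⟨s, hs, hmid, fun t ht ↦ ⟨⟨?_, hbefore t ht⟩, hvel t ht⟩⟩
  simpa using angle_le_angle ht.1 fun r hr ↦ (hvel r ⟨hr.1, hr.2.trans ht.2⟩).le

theorem pi_div_two_le (h : IsBarrierShot a v T) {s : ℝ} (hs : 0 ≤ s) (hmid : angle a v s = π / 2) :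
    ∀ t ∈ Icc s T, π / 2 ≤ angle a v t := by
  intro t ht
  by_contra! hlt
  obtain ⟨m, hm, hmin⟩ := isCompact_Icc.exists_isMinOn ⟨t, ht⟩ (continuous_angle a v).continuousOn
  have hmlt : angle a v m < π / 2 := (hmin ht).trans_lt hlt
  have hms : s < m := hm.1.lt_of_ne fun heq ↦ by subst heq; exact hmlt.ne hmid
  have hmT : m < T := hm.2.lt_of_ne fun heq ↦ by
    subst heq
    linarith [h.le_end, pi_gt_three]
  have hloc : IsLocalMin (angle a v) m := hmin.isLocalMin (Icc_mem_nhds hms hmT)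
  exact h.velocity_ne_zero ⟨hs.trans hm.1, hm.2⟩ hmlt.le
    (hloc.hasDerivAt_eq_zero (hasDerivAt_angle a v m))

theorem le_angle (h : IsBarrierShot a v T) : ∀ t ∈ Icc 0 T, a ≤ angle a v t := by
  intro t ht
  obtain ⟨s, hs, hmid, hascent⟩ := h.exists_ascent (ht.1.trans ht.2)
  rcases le_total t s with hts | hst
  · exact (hascent t ⟨ht.1, hts⟩).1.1
  · linarith [h.pi_div_two_le hs.1 hmid t ⟨hst, ht.2⟩, h.start_mem.2, pi_gt_three]

theorem angle_le_max (h : IsBarrierShot a v T) {t : ℝ} (ht : t ∈ Icc 0 T) :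
    angle a v t ≤ max (angle a v T) π := by
  rcases le_or_gt (energy a v) 0 with hE | hE
  · exact le_max_of_le_right
      (angle_lt_pi_of_energy_nonpos hE (by linarith [h.start_mem.2, pi_gt_three]) ht.1).le
  · exact le_max_of_le_left
      (angle_mem_Icc_of_energy_pos hE (h.initialVelocity_pos (ht.1.trans ht.2)) ht).2

theorem jacobi_pos_and_lt_energyDecay (h : IsBarrierShot a v T) (hT : 0 < T)
    (hE : energy a v ≤ 0) :
    0 < jacobi a v T ∧ 2 * energy a v - 2 / 3 < T * energyDecay a v T := by
  have hv := h.initialVelocity_pos hT.le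
  obtain ⟨s, hs, hmid, hascent⟩ := h.exists_ascent hT.le
  have hhigh (t : ℝ) (ht : t ∈ Icc s T) : angle a v t ∈ Ico (π / 2) π :=
    ⟨h.pi_div_two_le hs.1 hmid t ht, angle_lt_pi_of_energy_nonpos hE
      (by linarith [h.start_mem.2, pi_gt_three]) (hs.1.trans ht.1)⟩
  have hTmem : T ∈ Icc s T := right_mem_Icc.mpr hs.2
  have hsin (t : ℝ) (ht : t ∈ Icc s T) : 0 < sin (angle a v t) :=
    sin_pos_of_pos_of_lt_pi (by linarith [pi_pos, (hhigh t ht).1]) (hhigh t ht).2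
  rcases lt_trichotomy (velocity a v T) 0 with hneg | hzero | hpos
  · have hlow (t : ℝ) (ht : t ∈ Icc 0 s) : angle a v t ∈ Icc (-(π / 2)) (π / 2) :=
      ⟨by linarith [(hascent t ht).1.1, h.start_mem.1, pi_gt_three], (hascent t ht).1.2⟩
    exact jacobi_pos_and_lt_energyDecay_of_gap_pos hE hv hT.le hneg.le <|
      gap_pos h.start_mem ⟨h.cos_one_le hT.le, by linarith⟩ hs.1 hs.2
        (fun t ht ↦ (hascent t ht).2) hlow hmid hhigh h.le_end hneg
  · have hw := wronskian_eq a v T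
    rw [hzero, mul_zero, zero_add] at hw
    refine ⟨pos_of_mul_pos_left (hw.symm ▸ hv) (hsin T hTmem).le, ?_⟩
    rw [energyDecay, hzero, mul_zero, zero_div]
    linarith
  · have hvel (t : ℝ) (ht : t ∈ Icc 0 T) : 0 < velocity a v t := by
      rcases le_total t s with hts | hst
      · exact (hascent t ⟨ht.1, hts⟩).2
      · refine hpos.trans_le (le_of_hasDerivAt_nonpos ht.2 (fun r _ ↦ hasDerivAt_velocity a v r)
          fun r hr ↦ ?_)
        linarith [hsin r ⟨hst.trans hr.1, hr.2⟩]
    have hj := jacobi_pos_of_velocity_pos hT hvel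
    refine ⟨hj, ?_⟩
    have hdecay : 0 < T * energyDecay a v T := mul_pos hT (div_pos (mul_pos hv hpos) hj)
    linarith

theorem jacobi_pos (h : IsBarrierShot a v T) (hT : 0 < T) : 0 < jacobi a v T := by
  rcases le_or_gt (energy a v) 0 with hE | hE
  · exact (h.jacobi_pos_and_lt_energyDecay hT hE).1
  · exact jacobi_pos_of_energy_pos hE hT (h.initialVelocity_pos hT.le)

theorem of_fast (ha : a ∈ Icc (-1) 1) (hend : π - 1 ≤ angle a v T) (hv : T ≤ v) :
    IsBarrierShot a v T where
  start_mem := ha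
  neg_two_lt t ht := by
    have hle := le_angle_of_nonneg (a := a) (v := v) ht.1
    linarith [mul_nonneg (sub_nonneg.mpr (ht.2.trans hv)) ht.1, ha.1]
  le_end := hend

end IsBarrierShot

theorem eventually_forall_angle_mem {a v T : ℝ} {U : Set ℝ} (hU : IsOpen U) (hT : 0 < T)
    (h : ∀ t ∈ Icc 0 T, angle a v t ∈ U) :
    ∀ᶠ p : ℝ × ℝ × ℝ in 𝓝 (a, v, T), ∀ t ∈ Icc 0 p.2.2, angle p.1 p.2.1 t ∈ U := by
  have hrescaled : ∀ᶠ p : ℝ × ℝ × ℝ in 𝓝 (a, v, T), ∀ s ∈ Icc (0 : ℝ) 1,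
      angle p.1 p.2.1 (s * p.2.2) ∈ U := by
    refine isCompact_Icc.eventually_forall_of_forall_eventually fun s hs ↦ ?_
    have hcont : Continuous fun z : (ℝ × ℝ × ℝ) × ℝ ↦ angle z.1.1 z.1.2.1 (z.2 * z.1.2.2) :=
      contDiff_angle.continuous.comp
        (f := fun z : (ℝ × ℝ × ℝ) × ℝ ↦ (z.1.1, z.1.2.1, z.2 * z.1.2.2)) (by fun_prop)
    exact hcont.continuousAt.eventually_mem (x := ((a, v, T), s)) <| hU.mem_nhds <|
      h _ ⟨mul_nonneg hs.1 hT.le, mul_le_of_le_one_left hT.le hs.2⟩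
  have hpos : ∀ᶠ p : ℝ × ℝ × ℝ in 𝓝 (a, v, T), 0 < p.2.2 :=
    (by fun_prop : Continuous fun p : ℝ × ℝ × ℝ ↦ p.2.2).continuousAt.eventually (lt_mem_nhds hT)
  filter_upwards [hrescaled, hpos] with p hp hp0 t ht
  simpa only [div_mul_cancel₀ t hp0.ne'] using
    hp (t / p.2.2) ⟨div_nonneg ht.1 hp0.le, (div_le_one hp0).mpr ht.2⟩

theorem eventually_neg_two_lt_angle {a v T : ℝ} (hT : 0 < T) (h : ∀ t ∈ Icc 0 T, -2 < angle a v t) :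
    ∀ᶠ w in 𝓝 v, ∀ t ∈ Icc 0 T, -2 < angle a w t :=
  (by fun_prop : Continuous fun w : ℝ ↦ (a, w, T)).continuousAt.eventually
    (eventually_forall_angle_mem isOpen_Ioi hT h)

theorem isClosed_isBarrierShot (a T : ℝ) : IsClosed {v | IsBarrierShot a v T} := by
  have heq : {v | IsBarrierShot a v T} = {_v | a ∈ Icc (-1) 1} ∩
      (⋂ t ∈ Icc 0 T, {v | a ≤ angle a v t}) ∩ {v | π - 1 ≤ angle a v T} := by
    ext v
    simp only [mem_inter_iff, mem_iInter, mem_ofPred_eq]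
    exact ⟨fun h ↦ ⟨⟨h.start_mem, h.le_angle⟩, h.le_end⟩,
      fun h ↦ ⟨h.1.1, fun t ht ↦ by linarith [h.1.1.1, h.1.2 t ht], h.2⟩⟩
  rw [heq]
  exact (isClosed_const.inter (isClosed_biInter fun t _ ↦
    isClosed_le continuous_const (continuous_angle_initialVelocity a t))).inter
    (isClosed_le continuous_const (continuous_angle_initialVelocity a T))

-- Moving `v` up, the arrival angle increases while the shot stays above `-2`, and staying above
-- `-2` cannot be lost since a barrier shot never falls below its starting angle.
theorem IsBarrierShot.mono {a v w T : ℝ} (h : IsBarrierShot a v T) (hT : 0 < T) (hvw : v ≤ w) :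
    IsBarrierShot a w T := by
  suffices hsub : Icc v w ⊆ {v | IsBarrierShot a v T} from hsub (right_mem_Icc.mpr hvw)
  refine IsClosed.Icc_subset_of_forall_exists_gt
    ((isClosed_isBarrierShot a T).inter isClosed_Icc) h fun x ⟨hx, _⟩ y hy ↦ ?_
  have hslope : ∀ᶠ z in 𝓝[>] x, 0 < slope (fun v ↦ angle a v T) x z :=
    ((hasDerivWithinAt_iff_tendsto_slope' self_notMem_Ioi).mp
      (hasDerivAt_angle_jacobi a x T).hasDerivWithinAt).eventually (lt_mem_nhds (hx.jacobi_pos hT))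
  have htube := (eventually_neg_two_lt_angle hT hx.neg_two_lt).filter_mono
    (nhdsWithin_le_nhds (s := Ioi x))
  obtain ⟨z, ⟨hz, hzslope⟩, hzy⟩ :=
    ((htube.and hslope).and (Ioc_mem_nhdsGT hy)).exists
  exact ⟨z, ⟨hx.start_mem, hz, hx.le_end.trans ((slope_pos_iff_of_le hzy.1.le).mp hzslope).le⟩, hzy⟩

theorem existsUnique_barrier {a b T : ℝ} (hT : 0 < T) (ha : a ∈ Icc (-1) 1) (hb : π - 1 ≤ b) :
    ∃! v, angle a v T = b ∧ ∀ t ∈ Icc 0 T, angle a v t ∈ Ioi (-2) := by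
  set A : Set ℝ := {v | IsBarrierShot a v T}
  have hfast : b ≤ angle a (T + (b - a) / T) T := le_angle_of_fast hT
  have hfastA : T + (b - a) / T ∈ A := .of_fast ha (hb.trans hfast) <|
    le_add_of_nonneg_right (div_nonneg (by linarith [ha.2, pi_gt_three]) hT.le)
  have hbdd : BddBelow A := ⟨0, fun v hv ↦ (hv.initialVelocity_pos hT.le).le⟩
  have hinf : sInf A ∈ A := (isClosed_isBarrierShot a T).csInf_mem ⟨_, hfastA⟩ hbdd
  have hslow : angle a (sInf A) T ≤ b := by
    by_contra! hlt
    have hnear : ∀ᶠ v in 𝓝[<] sInf A, (∀ t ∈ Icc 0 T, -2 < angle a v t) ∧ b < angle a v T :=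
      nhdsWithin_le_nhds <| (eventually_neg_two_lt_angle hT hinf.neg_two_lt).and <|
        (continuous_angle_initialVelocity a T).continuousAt.eventually (lt_mem_nhds hlt)
    obtain ⟨v, hv, hvlt⟩ := (hnear.and self_mem_nhdsWithin).exists
    exact (csInf_le hbdd ⟨ha, hv.1, hb.trans hv.2.le⟩).not_gt hvlt
  obtain ⟨v, hv, hvb⟩ := intermediate_value_Icc (csInf_le hbdd hfastA)
    (continuous_angle_initialVelocity a T).continuousOn ⟨hslow, hfast⟩
  have hmono : StrictMonoOn (fun v ↦ angle a v T) A :=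
    strictMonoOn_angle ⟨fun _ hx _ _ _ hz ↦ hx.mono hT hz.1⟩ fun v hv ↦ hv.jacobi_pos hT
  have hvA : v ∈ A := hinf.mono hT hv.1
  exact ⟨v, ⟨hvb, hvA.neg_two_lt⟩, fun w hw ↦
    hmono.injOn ⟨ha, hw.2, hw.1.symm ▸ hb⟩ hvA (hw.1.trans hvb.symm)⟩

end Barrier

/-! ### Regular level sets -/

section LevelSet

variable {E : Type*} [NormedAddCommGroup E] [NormedSpace ℝ E] [CompleteSpace E] {n : WithTop ℕ∞}

theorem exists_contDiffAt_implicit {f : E × ℝ → ℝ} {x₀ : E} {y₀ d : ℝ} (hn : n ≠ 0)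
    (hf : ContDiffAt ℝ n f (x₀, y₀)) (hd : HasDerivAt (fun y ↦ f (x₀, y)) d y₀) (hd0 : d ≠ 0) :
    ∃ ψ : E → ℝ, ContDiffAt ℝ n ψ x₀ ∧ ψ x₀ = y₀ ∧ ∀ᶠ x in 𝓝 x₀, f (x, ψ x) = f (x₀, y₀) := by
  have hpartial : fderiv ℝ f (x₀, y₀) (0, 1) = d :=
    ((hf.differentiableAt hn).hasFDerivAt.comp_hasDerivAt y₀
      ((hasDerivAt_const y₀ x₀).prodMk (hasDerivAt_id y₀))).unique hd
  have hinv : (fderiv ℝ f (x₀, y₀) ∘L .inr ℝ E ℝ).IsInvertible := by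
    refine ⟨ContinuousLinearEquiv.unitsEquivAut ℝ (Units.mk0 d hd0), ?_⟩
    ext
    simp [hpartial]
  exact ⟨hf.implicitFunction hn hinv, hf.contDiffAt_implicitFunction hn hinv,
    hf.implicitFunction_apply_self hn hinv, hf.eventually_apply_implicitFunction hn hinv⟩

theorem contDiffWithinAt_of_regular_level {F : E → ℝ → ℝ} {G : E × ℝ → ℝ} {S : Set E} {τ : E → ℝ}
    {x₀ : E} {c d : ℝ} (hn : n ≠ 0) (hG : ContDiffAt ℝ n G (x₀, τ x₀))
    (hFG : ∀ᶠ z in 𝓝 (x₀, τ x₀), z ∈ S ×ˢ Ioi 0 → G z = F z.1 z.2)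
    (hd : HasDerivAt (F x₀) d (τ x₀)) (hd0 : d ≠ 0) (hx₀ : x₀ ∈ S) (hpos : 0 < τ x₀)
    (hτ : ∀ x ∈ S, ∀ t > 0, F x t = c ↔ t = τ x) : ContDiffWithinAt ℝ n τ S x₀ := by
  have hline : G ∘ Prod.mk x₀ =ᶠ[𝓝 (τ x₀)] F x₀ := by
    have hcont : ContinuousAt (Prod.mk x₀) (τ x₀) := by fun_prop
    filter_upwards [hcont.eventually hFG, lt_mem_nhds hpos] with t ht ht0 using ht ⟨hx₀, ht0⟩
  have hG₀ : G (x₀, τ x₀) = c := hline.eq_of_nhds.trans ((hτ x₀ hx₀ _ hpos).mpr rfl)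
  obtain ⟨ψ, hψ, hψ₀, hlevel⟩ :=
    exists_contDiffAt_implicit hn hG (hd.congr_of_eventuallyEq hline) hd0
  have hgraph : Tendsto (fun x ↦ (x, ψ x)) (𝓝 x₀) (𝓝 (x₀, τ x₀)) :=
    hψ₀ ▸ (continuousAt_id.prodMk hψ.continuousAt).tendsto
  refine hψ.contDiffWithinAt.congr_of_eventuallyEq ?_ hψ₀.symm
  filter_upwards [nhdsWithin_le_nhds hlevel, nhdsWithin_le_nhds (hgraph.eventually hFG),
    nhdsWithin_le_nhds (hψ.continuousAt.eventually (lt_mem_nhds (hψ₀ ▸ hpos))),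
    self_mem_nhdsWithin] with x hx hxF hx0 hxS
  exact ((hτ x hxS _ hx0).mp ((hxF ⟨hxS, hx0⟩).symm.trans (hx.trans hG₀))).symm

theorem eq_of_deriv_neg_on_level {f f' : ℝ → ℝ} {A : Set ℝ} {c s t : ℝ} (hA : A.OrdConnected)
    (hf : ∀ r ∈ A, HasDerivAt f (f' r) r) (hneg : ∀ r ∈ A, f r = c → f' r < 0) (hs : s ∈ A)
    (ht : t ∈ A) (hsc : f s = c) (htc : f t = c) : s = t := by
  wlog hst : s < t generalizing s t
  · exact (not_lt.mp hst).eq_or_lt.elim Eq.symm fun hts ↦ (this ht hs htc hsc hts).symm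
  have hsub : Icc s t ⊆ A := hA.out hs ht
  have hle : ∀ r ∈ Icc s t, f r ≤ c := fun r hr ↦
    image_le_of_deriv_right_lt_deriv_boundary
      (fun r hr ↦ (hf r (hsub hr)).continuousAt.continuousWithinAt)
      (fun r hr ↦ (hf r (hsub (Ico_subset_Icc_self hr))).hasDerivWithinAt) hsc.le
      (fun r ↦ hasDerivAt_const r c) (fun r hr ↦ hneg r (hsub (Ico_subset_Icc_self hr))) hr
  have hslope : Tendsto (slope f t) (𝓝[<] t) (𝓝 (f' t)) :=
    (hasDerivWithinAt_iff_tendsto_slope' self_notMem_Iio).mp (hf t ht).hasDerivWithinAt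
  refine ((hneg t ht htc).not_ge (ge_of_tendsto hslope ?_)).elim
  filter_upwards [Ioo_mem_nhdsLT hst] with r hr
  rw [slope_def_field, htc]
  exact div_nonneg_of_nonpos (sub_nonpos.mpr (hle r ⟨hr.1.le, hr.2.le⟩)) (sub_nonpos.mpr hr.2.le)

end LevelSet

/-! ### Shooting problems -/

section Shooting

/-- A class of two-point problems for the pendulum that shooting solves uniquely: for boundary
values in `data` and each transit time there is exactly one shot that hits the target while staying
in `region`. The last two fields say that these shots are nondegenerate and that, even at negative
energy, the energy does not increase too fast with the transit time. -/
structure ShootingProblem where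
  data : Set (ℝ × ℝ)
  region : Set ℝ
  isOpen_region : IsOpen region
  lt_of_mem : ∀ {z : ℝ × ℝ}, z ∈ data → z.1 < z.2
  existsUnique : ∀ {z : ℝ × ℝ} {T : ℝ}, z ∈ data → 0 < T →
    ∃! v, angle z.1 v T = z.2 ∧ ∀ t ∈ Icc 0 T, angle z.1 v t ∈ region
  jacobi_pos : ∀ {a v T : ℝ}, 0 < T → (a, angle a v T) ∈ data →
    (∀ t ∈ Icc 0 T, angle a v t ∈ region) → energy a v ≤ 0 → 0 < jacobi a v T
  lt_energyDecay : ∀ {a v T : ℝ}, 0 < T → (a, angle a v T) ∈ data →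
    (∀ t ∈ Icc 0 T, angle a v t ∈ region) → energy a v ≤ 0 →
      2 * energy a v - 2 / 3 < T * energyDecay a v T

namespace ShootingProblem

variable (P : ShootingProblem) {z : ℝ × ℝ} {T v : ℝ}

/-- The initial velocity of the shot solving the problem with boundary values `z` in time `T`; a
junk value unless `z ∈ P.data` and `0 < T`. -/
noncomputable def shotVelocity (z : ℝ × ℝ) (T : ℝ) : ℝ :=
  Classical.epsilon fun v ↦ angle z.1 v T = z.2 ∧ ∀ t ∈ Icc 0 T, angle z.1 v t ∈ P.region

/-- The energy of the shot solving the problem with boundary values `z` in time `T`. -/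
noncomputable def shotEnergy (z : ℝ × ℝ) (T : ℝ) : ℝ := energy z.1 (P.shotVelocity z T)

/-- The quantity `energyDecay` of the shot solving the problem with boundary values `z` in time
`T`. -/
noncomputable def shotDecay (z : ℝ × ℝ) (T : ℝ) : ℝ := energyDecay z.1 (P.shotVelocity z T) T

variable {P}

theorem angle_shotVelocity (hz : z ∈ P.data) (hT : 0 < T) :
    angle z.1 (P.shotVelocity z T) T = z.2 :=
  (Classical.epsilon_spec (P.existsUnique hz hT).exists).1

theorem angle_shotVelocity_mem (hz : z ∈ P.data) (hT : 0 < T) :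
    ∀ t ∈ Icc 0 T, angle z.1 (P.shotVelocity z T) t ∈ P.region :=
  (Classical.epsilon_spec (P.existsUnique hz hT).exists).2

theorem eq_shotVelocity (hz : z ∈ P.data) (hT : 0 < T) (hv : angle z.1 v T = z.2)
    (hmem : ∀ t ∈ Icc 0 T, angle z.1 v t ∈ P.region) : v = P.shotVelocity z T :=
  (P.existsUnique hz hT).unique ⟨hv, hmem⟩
    ⟨angle_shotVelocity hz hT, angle_shotVelocity_mem hz hT⟩

theorem mk_angle_shotVelocity_mem (hz : z ∈ P.data) (hT : 0 < T) :
    (z.1, angle z.1 (P.shotVelocity z T) T) ∈ P.data := by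
  rwa [angle_shotVelocity hz hT]

theorem shotVelocity_pos (hz : z ∈ P.data) (hT : 0 < T) (hE : 0 < P.shotEnergy z T) :
    0 < P.shotVelocity z T :=
  pos_of_energy_pos hE hT.le ((P.lt_of_mem hz).trans_eq (angle_shotVelocity hz hT).symm)

theorem jacobi_shotVelocity_pos (hz : z ∈ P.data) (hT : 0 < T) :
    0 < jacobi z.1 (P.shotVelocity z T) T := by
  rcases le_or_gt (P.shotEnergy z T) 0 with hE | hE
  · exact P.jacobi_pos hT (mk_angle_shotVelocity_mem hz hT) (angle_shotVelocity_mem hz hT) hE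
  · exact jacobi_pos_of_energy_pos hE hT (shotVelocity_pos hz hT hE)

theorem lt_shotDecay (hz : z ∈ P.data) (hT : 0 < T) (hE : P.shotEnergy z T ≤ 0) :
    2 * P.shotEnergy z T - 2 / 3 < T * P.shotDecay z T :=
  P.lt_energyDecay hT (mk_angle_shotVelocity_mem hz hT) (angle_shotVelocity_mem hz hT) hE

theorem two_mul_shotEnergy_le (hz : z ∈ P.data) (hT : 0 < T) (hE : 0 < P.shotEnergy z T) :
    2 * P.shotEnergy z T ≤ T * P.shotDecay z T :=
  two_mul_energy_le_mul_energyDecay hE hT (shotVelocity_pos hz hT hE)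

theorem slope_sq_sub_shotEnergy_mem (hz : z ∈ P.data) (hT : 0 < T) :
    ((z.2 - z.1) / T) ^ 2 / 2 - P.shotEnergy z T ∈ Icc 0 2 := by
  simpa only [angle_shotVelocity hz hT, shotEnergy] using
    energy_sub_slope_mem (a := z.1) (v := P.shotVelocity z T) hT

-- `P.data` need not be open, so smoothness is stated through an extension to a neighbourhood.
theorem exists_contDiffAt_shotVelocity (hz : z ∈ P.data) (hT : 0 < T) :
    ∃ ν : (ℝ × ℝ) × ℝ → ℝ, ContDiffAt ℝ ∞ ν (z, T) ∧
      ∀ᶠ y in 𝓝 (z, T), y ∈ P.data ×ˢ Ioi 0 → ν y = P.shotVelocity y.1 y.2 := by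
  have hmiss : ContDiff ℝ ∞ fun y : ((ℝ × ℝ) × ℝ) × ℝ ↦ angle y.1.1.1 y.2 y.1.2 - y.1.1.2 :=
    (contDiff_angle.comp (f := fun y : ((ℝ × ℝ) × ℝ) × ℝ ↦ (y.1.1.1, y.2, y.1.2))
      (by fun_prop)).sub (by fun_prop)
  obtain ⟨ν, hν, hν₀, hhit⟩ := exists_contDiffAt_implicit (x₀ := (z, T)) (by simp)
    hmiss.contDiffAt ((hasDerivAt_angle_jacobi z.1 (P.shotVelocity z T) T).sub_const z.2)
    (jacobi_shotVelocity_pos hz hT).ne'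
  have hlim : Tendsto (fun y : (ℝ × ℝ) × ℝ ↦ (y.1.1, ν y, y.2)) (𝓝 (z, T))
      (𝓝 (z.1, P.shotVelocity z T, T)) := by
    rw [← hν₀]
    exact ((by fun_prop : ContinuousAt (fun y : (ℝ × ℝ) × ℝ ↦ y.1.1) (z, T)).prodMk
      (hν.continuousAt.prodMk continuousAt_snd)).tendsto
  refine ⟨ν, hν, ?_⟩
  filter_upwards [hhit, hlim.eventually (eventually_forall_angle_mem P.isOpen_region hT
    (angle_shotVelocity_mem hz hT))] with y hy hregion hdom
  simp only [angle_shotVelocity hz hT, sub_self] at hy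
  exact eq_shotVelocity hdom.1 hdom.2 (sub_eq_zero.mp hy) hregion

theorem exists_contDiffAt_shotEnergy (hz : z ∈ P.data) (hT : 0 < T) :
    ∃ e : (ℝ × ℝ) × ℝ → ℝ, ContDiffAt ℝ ∞ e (z, T) ∧
      ∀ᶠ y in 𝓝 (z, T), y ∈ P.data ×ˢ Ioi 0 → e y = P.shotEnergy y.1 y.2 := by
  obtain ⟨ν, hν, heq⟩ := exists_contDiffAt_shotVelocity hz hT
  refine ⟨fun y ↦ energy y.1.1 (ν y), ?_,
    heq.mono fun y hy hdom ↦ congrArg (energy y.1.1) (hy hdom)⟩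
  simp only [energy, Vpend]
  fun_prop

theorem hasDerivAt_shotVelocity (hz : z ∈ P.data) (hT : 0 < T) :
    HasDerivAt (P.shotVelocity z)
      (-(velocity z.1 (P.shotVelocity z T) T / jacobi z.1 (P.shotVelocity z T) T)) T := by
  obtain ⟨ν, hν, heq⟩ := exists_contDiffAt_shotVelocity hz hT
  have hline : ContDiffAt ℝ ∞ (Prod.mk z) T := by fun_prop
  have hext : P.shotVelocity z =ᶠ[𝓝 T] ν ∘ Prod.mk z := by
    filter_upwards [hline.continuousAt.eventually heq, lt_mem_nhds hT] with t ht ht0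
      using (ht ⟨hz, ht0⟩).symm
  have hderiv := (((hν.comp T hline).congr_of_eventuallyEq hext).differentiableAt
    (by simp)).hasDerivAt
  have htarget : (fun t ↦ angle z.1 (P.shotVelocity z t) t) =ᶠ[𝓝 T] fun _ ↦ z.2 := by
    filter_upwards [lt_mem_nhds hT] with t ht using angle_shotVelocity hz ht
  have hzero := (hasDerivAt_angle_comp (a := z.1) hderiv).unique
    ((hasDerivAt_const T z.2).congr_of_eventuallyEq htarget)
  refine hderiv.congr_deriv ?_
  rw [← neg_div, eq_div_iff (jacobi_shotVelocity_pos hz hT).ne']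
  linarith

theorem hasDerivAt_shotEnergy (hz : z ∈ P.data) (hT : 0 < T) :
    HasDerivAt (P.shotEnergy z) (-P.shotDecay z T) T := by
  have hsq := (((hasDerivAt_shotVelocity hz hT).pow 2).div_const 2).add_const (Vpend z.1)
  refine hsq.congr_deriv ?_
  rw [shotDecay, energyDecay]
  push_cast
  ring

end ShootingProblem

end Shooting

/-! ### Total energy of several pendula -/

section TotalEnergy

variable {ι : Type*} [Fintype ι]

theorem sum_pos_of_energy_bounds {e d : ι → ℝ} (hsum : 0 < ∑ i, e i)
    (hcard : (Fintype.card ι : ℝ) ≤ 3 * ∑ i, e i + 1) (hpos : ∀ i, 0 < e i → 2 * e i ≤ d i)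
    (hnonpos : ∀ i, e i ≤ 0 → 2 * e i - 2 / 3 < d i) : 0 < ∑ i, d i := by
  classical
  by_cases hall : ∀ i, 0 < e i
  · calc 0 < 2 * ∑ i, e i := by positivity
      _ = ∑ i, 2 * e i := Finset.mul_sum ..
      _ ≤ ∑ i, d i := Finset.sum_le_sum fun i _ ↦ hpos i (hall i)
  push Not at hall
  obtain ⟨j, hj⟩ := hall
  obtain ⟨k, -, hk⟩ := Finset.exists_lt_of_sum_lt (by simpa using hsum : ∑ _i : ι, 0 < ∑ i, e i)
  have hlt : (Finset.univ.filter fun i ↦ e i ≤ 0).card < Fintype.card ι :=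
    Finset.card_lt_univ_of_notMem (x := k) (by simpa using hk)
  have hle : ((Finset.univ.filter fun i ↦ e i ≤ 0).card : ℝ) + 1 ≤ Fintype.card ι := by
    exact_mod_cast hlt
  have hstrict (i : ι) (hi : e i ≤ 0) : 2 * e i - (if e i ≤ 0 then 2 / 3 else 0) < d i := by
    simpa only [if_pos hi] using hnonpos i hi
  calc 0 ≤ 2 * ∑ i, e i - (Finset.univ.filter fun i ↦ e i ≤ 0).card * (2 / 3) := by linarith
    _ = ∑ i, (2 * e i - if e i ≤ 0 then 2 / 3 else 0) := by
      rw [Finset.sum_sub_distrib, ← Finset.mul_sum, ← Finset.sum_filter, Finset.sum_const,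
        nsmul_eq_mul]
    _ < ∑ i, d i := by
      refine Finset.sum_lt_sum (fun i _ ↦ ?_) ⟨j, Finset.mem_univ j, hstrict j hj⟩
      rcases le_or_gt (e i) 0 with hi | hi
      · exact (hstrict i hi).le
      · simpa only [if_neg hi.not_ge, sub_zero] using hpos i hi

open ShootingProblem

/-- The total energy, as a function of the common transit time `T`, of the shots solving the
problems `P i` with boundary values `z i`. -/
noncomputable def totalEnergy (P : ι → ShootingProblem) (z : ι → ℝ × ℝ) (T : ℝ) : ℝ :=
  ∑ i, (P i).shotEnergy (z i) T

/-- The transit time at which the shots solving the problems `P i` with boundary values `z i` have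
total energy `h`; a junk value if there is no such time. -/
noncomputable def transitTime (P : ι → ShootingProblem) (h : ℝ) (z : ι → ℝ × ℝ) : ℝ :=
  Classical.epsilon fun T ↦ 0 < T ∧ totalEnergy P z T = h

variable {P : ι → ShootingProblem} {z : ι → ℝ × ℝ} {h T : ℝ}

theorem hasDerivAt_totalEnergy (hz : ∀ i, z i ∈ (P i).data) (hT : 0 < T) :
    HasDerivAt (totalEnergy P z) (-∑ i, (P i).shotDecay (z i) T) T :=
  (HasDerivAt.fun_sum fun i _ ↦ hasDerivAt_shotEnergy (hz i) hT).congr_deriv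
    (Finset.sum_neg_distrib ..)

theorem sum_shotDecay_pos (hh : 0 < h) (hcard : (Fintype.card ι : ℝ) ≤ 3 * h + 1)
    (hz : ∀ i, z i ∈ (P i).data) (hT : 0 < T) (hE : totalEnergy P z T = h) :
    0 < ∑ i, (P i).shotDecay (z i) T := by
  subst hE
  have hsum : 0 < ∑ i, T * (P i).shotDecay (z i) T :=
    sum_pos_of_energy_bounds hh hcard (fun i ↦ two_mul_shotEnergy_le (hz i) hT)
      fun i ↦ lt_shotDecay (hz i) hT
  rwa [← Finset.mul_sum, mul_pos_iff_of_pos_left hT] at hsum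

theorem slope_sum_sub_totalEnergy_mem (hz : ∀ i, z i ∈ (P i).data) (hT : 0 < T) :
    (∑ i, ((z i).2 - (z i).1) ^ 2 / 2) / T ^ 2 - totalEnergy P z T ∈
      Icc 0 (2 * Fintype.card ι : ℝ) := by
  have hslope (i : ι) := slope_sq_sub_shotEnergy_mem (hz i) hT
  have hsum : (∑ i, ((z i).2 - (z i).1) ^ 2 / 2) / T ^ 2 - totalEnergy P z T =
      ∑ i, ((((z i).2 - (z i).1) / T) ^ 2 / 2 - (P i).shotEnergy (z i) T) := by
    rw [Finset.sum_div, totalEnergy, ← Finset.sum_sub_distrib]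
    simp only [div_pow, div_right_comm]
  rw [hsum]
  refine ⟨Finset.sum_nonneg fun i _ ↦ (hslope i).1,
    (Finset.sum_le_card_nsmul _ _ 2 fun i _ ↦ (hslope i).2).trans_eq ?_⟩
  rw [Finset.card_univ, nsmul_eq_mul, mul_comm]

theorem exists_totalEnergy_eq [Nonempty ι] (hh : 0 < h) (hz : ∀ i, z i ∈ (P i).data) :
    ∃ T > 0, totalEnergy P z T = h := by
  set M : ℝ := ∑ i, ((z i).2 - (z i).1) ^ 2 / 2
  have hM : 0 < M := Finset.sum_pos
    (fun i _ ↦ half_pos (pow_pos (sub_pos.mpr ((P i).lt_of_mem (hz i))) 2)) Finset.univ_nonempty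
  have hn : (0 : ℝ) ≤ 2 * Fintype.card ι := by positivity
  have htime {E : ℝ} (hE : 0 < E) : 0 < √(M / E) ∧ M / √(M / E) ^ 2 = E :=
    ⟨Real.sqrt_pos.mpr (div_pos hM hE),
      by rw [Real.sq_sqrt (div_pos hM hE).le, div_div_cancel₀ hM.ne']⟩
  obtain ⟨hshort, hshortE⟩ := htime (E := h + 2 * Fintype.card ι) (by positivity)
  obtain ⟨hlong, hlongE⟩ := htime hh
  have hle : √(M / (h + 2 * Fintype.card ι)) ≤ √(M / h) :=
    Real.sqrt_le_sqrt (div_le_div_of_nonneg_left hM.le hh (le_add_of_nonneg_right hn))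
  have hshortT := slope_sum_sub_totalEnergy_mem hz hshort
  have hlongT := slope_sum_sub_totalEnergy_mem hz hlong
  rw [hshortE] at hshortT
  rw [hlongE] at hlongT
  obtain ⟨T, hT, hTE⟩ := intermediate_value_Icc' hle
    (fun t ht ↦ (hasDerivAt_totalEnergy hz (hshort.trans_le ht.1)).continuousAt.continuousWithinAt)
    (show h ∈ Icc _ _ from ⟨by linarith [hlongT.1], by linarith [hshortT.2]⟩)
  exact ⟨T, hshort.trans_le hT.1, hTE⟩

variable [Nonempty ι]

theorem transitTime_pos (hh : 0 < h) (hz : ∀ i, z i ∈ (P i).data) : 0 < transitTime P h z :=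
  (Classical.epsilon_spec (exists_totalEnergy_eq hh hz)).1

theorem totalEnergy_transitTime (hh : 0 < h) (hz : ∀ i, z i ∈ (P i).data) :
    totalEnergy P z (transitTime P h z) = h :=
  (Classical.epsilon_spec (exists_totalEnergy_eq hh hz)).2

theorem totalEnergy_eq_iff (hh : 0 < h) (hcard : (Fintype.card ι : ℝ) ≤ 3 * h + 1)
    (hz : ∀ i, z i ∈ (P i).data) (hT : 0 < T) :
    totalEnergy P z T = h ↔ T = transitTime P h z := by
  refine ⟨fun hE ↦ ?_, fun hE ↦ hE ▸ totalEnergy_transitTime hh hz⟩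
  exact eq_of_deriv_neg_on_level ordConnected_Ioi (fun t ht ↦ hasDerivAt_totalEnergy hz ht)
    (fun t ht hE ↦ neg_lt_zero.mpr (sum_shotDecay_pos hh hcard hz ht hE)) hT
    (transitTime_pos hh hz) hE (totalEnergy_transitTime hh hz)

theorem contDiffOn_transitTime (hh : 0 < h) (hcard : (Fintype.card ι : ℝ) ≤ 3 * h + 1) :
    ContDiffOn ℝ ∞ (transitTime P h) {z | ∀ i, z i ∈ (P i).data} := by
  intro z hz
  have hT := transitTime_pos hh hz
  choose e he heq using fun i ↦ exists_contDiffAt_shotEnergy (hz i) hT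
  have hproj (i : ι) : ContDiffAt ℝ ∞ (fun y : (ι → ℝ × ℝ) × ℝ ↦ (y.1 i, y.2))
      (z, transitTime P h z) := by fun_prop
  refine contDiffWithinAt_of_regular_level (by simp)
    (G := fun y : (ι → ℝ × ℝ) × ℝ ↦ ∑ i, e i (y.1 i, y.2))
    (ContDiffAt.sum fun i _ ↦ (he i).comp (z, transitTime P h z) (hproj i)) ?_
    (hasDerivAt_totalEnergy hz hT) (neg_ne_zero.mpr (sum_shotDecay_pos hh hcard hz hT
      (totalEnergy_transitTime hh hz)).ne') hz hT fun y hy t ht ↦ totalEnergy_eq_iff hh hcard hy ht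
  filter_upwards [eventually_all.mpr fun i ↦ (hproj i).continuousAt.eventually (heq i)]
    with y hy hdom
  exact Finset.sum_congr rfl fun i _ ↦ hy i ⟨hdom.1 i, hdom.2⟩

end TotalEnergy

/-! ### Confined solutions of the two-point problem -/

section TwoPoint

open Real Pointwise

/-- `x`, with velocity `w`, is a solution of the pendulum equation on `[0, T]` that goes from `α` to
`β` without leaving `C`. -/
def IsConnectingSol (C : Set ℝ) (α β T : ℝ) (x w : ℝ → ℝ) : Prop :=
  IsPendSolOn x w (Icc 0 T) ∧ x 0 = α ∧ x T = β ∧ ∀ t ∈ Icc 0 T, x t ∈ C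

/-- For every transit time `T`, the pendulum goes from `α` to `β` inside `C` in exactly one way, and
then its energy is `e T`. -/
structure IsUniquelySolvable (C : Set ℝ) (α β : ℝ) (e : ℝ → ℝ) : Prop where
  exists_sol : ∀ {T : ℝ}, 0 < T → ∃ x w, IsConnectingSol C α β T x w
  eqOn : ∀ {T : ℝ} {x w y u : ℝ → ℝ}, 0 < T → IsConnectingSol C α β T x w →
    IsConnectingSol C α β T y u → EqOn x y (Icc 0 T)
  energy_eq : ∀ {T : ℝ} {x w : ℝ → ℝ}, 0 < T → IsConnectingSol C α β T x w →
    energy (x 0) (w 0) = e T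

variable {C : Set ℝ} {α β T : ℝ} {x w e : ℝ → ℝ}

theorem IsPendSolOn.energy_eq (hx : IsPendSolOn x w (Icc 0 T)) {t : ℝ} (ht : t ∈ Icc 0 T) :
    energy (x t) (w t) = energy (x 0) (w 0) := by
  obtain ⟨hxt, hwt⟩ := hx.eq_angle_and_eq_velocity_of_mem_Icc ht
  rw [hxt, hwt, energy_angle_velocity]

theorem IsConnectingSol.reverse (hx : IsConnectingSol C α β T x w) :
    IsConnectingSol (-C) (-β) (-α) T (fun t ↦ -x (T - t)) (fun t ↦ w (T - t)) := by
  obtain ⟨hsol, h0, hT, hmem⟩ := hx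
  refine ⟨by simpa only [neg_neg] using hsol.reverse.neg, by simp [hT], by simp [h0], fun t ht ↦ ?_⟩
  simpa only [Set.neg_mem_neg] using hmem (T - t) ⟨sub_nonneg.mpr ht.2, sub_le_self T ht.1⟩

theorem IsUniquelySolvable.reverse (h : IsUniquelySolvable C α β e) :
    IsUniquelySolvable (-C) (-β) (-α) e := by
  have hrev {T : ℝ} {x w : ℝ → ℝ} (hx : IsConnectingSol (-C) (-β) (-α) T x w) :
      IsConnectingSol C α β T (fun t ↦ -x (T - t)) (fun t ↦ w (T - t)) := by
    simpa only [neg_neg] using hx.reverse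
  refine ⟨fun hT ↦ ?_, fun hT hx hy t ht ↦ ?_, fun {T x w} hT hx ↦ ?_⟩
  · obtain ⟨x, w, hx⟩ := h.exists_sol hT
    exact ⟨_, _, hx.reverse⟩
  · simpa using h.eqOn hT (hrev hx) (hrev hy) ⟨sub_nonneg.mpr ht.2, sub_le_self _ ht.1⟩
  · rw [← h.energy_eq hT (hrev hx), ← hx.1.energy_eq (right_mem_Icc.mpr hT.le)]
    simp [energy, Vpend]

theorem ShootingProblem.isUniquelySolvable {P : ShootingProblem} {z : ℝ × ℝ} (hz : z ∈ P.data)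
    (hC : C ⊆ P.region)
    (hmem : ∀ T > 0, ∀ t ∈ Icc 0 T, angle z.1 (P.shotVelocity z T) t ∈ C) :
    IsUniquelySolvable C z.1 z.2 (P.shotEnergy z) := by
  have heq {T : ℝ} {x w : ℝ → ℝ} (hT : 0 < T) (hx : IsConnectingSol C z.1 z.2 T x w) :
      w 0 = P.shotVelocity z T ∧ EqOn x (angle z.1 (P.shotVelocity z T)) (Icc 0 T) := by
    obtain ⟨hsol, h0, hend, hxC⟩ := hx
    have hangle : EqOn x (angle z.1 (w 0)) (Icc 0 T) := fun t ht ↦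
      h0 ▸ (hsol.eq_angle_and_eq_velocity_of_mem_Icc ht).1
    have hv : w 0 = P.shotVelocity z T :=
      eq_shotVelocity hz hT (hangle (right_mem_Icc.mpr hT.le) ▸ hend)
        fun t ht ↦ hangle ht ▸ hC (hxC t ht)
    exact ⟨hv, hv ▸ hangle⟩
  refine ⟨fun {T} hT ↦ ⟨_, _, isPendSolOn_angle z.1 (P.shotVelocity z T) _, angle_zero _ _,
    angle_shotVelocity hz hT, hmem T hT⟩, fun hT hx hy ↦ (heq hT hx).2.trans (heq hT hy).2.symm,
    fun hT hx ↦ ?_⟩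
  rw [(heq hT hx).1, hx.2.1, shotEnergy]

/-- The two-point problem from `[-1, 1]` to `[π - 1, ∞)` for solutions that stay above `-2`. -/
def barrierProblem : ShootingProblem where
  data := {z | z.1 ∈ Icc (-1) 1 ∧ π - 1 ≤ z.2}
  region := Ioi (-2)
  isOpen_region := isOpen_Ioi
  lt_of_mem hz := by linarith [hz.1.2, hz.2, pi_gt_three]
  existsUnique hz hT := existsUnique_barrier hT hz.1 hz.2
  jacobi_pos hT hz hmem _ := IsBarrierShot.jacobi_pos ⟨hz.1, hmem, hz.2⟩ hT
  lt_energyDecay hT hz hmem hE :=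
    (IsBarrierShot.jacobi_pos_and_lt_energyDecay ⟨hz.1, hmem, hz.2⟩ hT hE).2

/-- The two-point problem for motions to the right across a top `(2k + 1)π` of the potential. -/
def crossingProblem : ShootingProblem where
  data := {z | z.1 < z.2 ∧ ∃ k : ℤ, (2 * k + 1) * π ∈ Icc z.1 z.2}
  region := univ
  isOpen_region := isOpen_univ
  lt_of_mem hz := hz.1
  existsUnique := by
    rintro z T ⟨hlt, k, hk⟩ hT
    simpa only [mem_univ, implies_true, and_true] using existsUnique_crossing hT hlt hk
  jacobi_pos := fun hT ⟨hlt, _, hk⟩ _ hE ↦ absurd hE (energy_pos_of_crossing hT.le hlt hk).not_ge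
  lt_energyDecay := fun hT ⟨hlt, _, hk⟩ _ hE ↦
    absurd hE (energy_pos_of_crossing hT.le hlt hk).not_ge

theorem isUniquelySolvable_barrierProblem {z : ℝ × ℝ} (hz : z ∈ barrierProblem.data)
    (hlo : Icc z.1 (max z.2 π) ⊆ C) (hhi : C ⊆ Ioi (-2)) :
    IsUniquelySolvable C z.1 z.2 (barrierProblem.shotEnergy z) := by
  refine ShootingProblem.isUniquelySolvable hz hhi fun T hT t ht ↦ hlo ?_
  have hend := ShootingProblem.angle_shotVelocity hz hT
  have hshot : IsBarrierShot z.1 (barrierProblem.shotVelocity z T) T :=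
    ⟨hz.1, ShootingProblem.angle_shotVelocity_mem hz hT, hend ▸ hz.2⟩
  exact ⟨hshot.le_angle t ht, hend ▸ hshot.angle_le_max ht⟩

theorem isUniquelySolvable_crossingProblem {z : ℝ × ℝ} (hz : z ∈ crossingProblem.data)
    (hC : Icc z.1 z.2 ⊆ C) : IsUniquelySolvable C z.1 z.2 (crossingProblem.shotEnergy z) := by
  refine ShootingProblem.isUniquelySolvable hz (subset_univ _) fun T hT t ht ↦ hC ?_
  have hend := ShootingProblem.angle_shotVelocity hz hT
  obtain ⟨hlt, k, hk⟩ := hz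
  rw [← hend] at hlt hk
  have hE := energy_pos_of_crossing hT.le hlt hk
  have hmem := angle_mem_Icc_of_energy_pos hE (pos_of_energy_pos hE hT.le hlt) ht
  rwa [hend] at hmem

theorem exists_odd_mul_pi_mem_Icc (h : 2 * π ≤ β - α) : ∃ k : ℤ, (2 * k + 1) * π ∈ Icc α β := by
  obtain ⟨k, hk, -⟩ := existsUnique_add_zsmul_mem_Ico two_pi_pos π α
  rw [zsmul_eq_mul] at hk
  exact ⟨k, by linarith [hk.1], by linarith [hk.2]⟩

/-- The shooting problem that solves the `k`-th case of the Pendulum Lemma. -/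
def shooting (k : Fin 4) : ShootingProblem :=
  if k = 0 ∨ k = 1 then barrierProblem else crossingProblem

/-- The boundary values for `shooting k`; the second case of the Pendulum Lemma is the first one for
the reversed motion `t ↦ -x (T - t)`. -/
def endpoints (k : Fin 4) (α β : ℝ) : ℝ × ℝ := if k = 1 then (-β, -α) else (α, β)

theorem contDiff_endpoints {ι : Type*} [Fintype ι] (k : Fin 4) (i : ι) {n : ℕ∞ω} :
    ContDiff ℝ n fun y : (ι → ℝ) × (ι → ℝ) ↦ endpoints k (y.1 i) (y.2 i) := by
  unfold endpoints
  split_ifs <;> fun_prop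

theorem AdmissCase.endpoints_mem_data {k : Fin 4} (h : AdmissCase k α β) :
    endpoints k α β ∈ (shooting k).data := by
  have hpi := pi_gt_three
  match k with
  | 0 =>
    obtain ⟨hα, hβ⟩ : |α| ≤ 1 ∧ |β - π| < 1 := h
    exact ⟨abs_le.mp hα, show π - 1 ≤ β by linarith [(abs_lt.mp hβ).1]⟩
  | 1 =>
    obtain ⟨hα, hβ⟩ : |α + π| ≤ 1 ∧ |β| ≤ 1 := h
    exact ⟨abs_le.mp ((abs_neg β).trans_le hβ),
      show π - 1 ≤ -α by linarith [(abs_le.mp hα).2]⟩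
  | 2 =>
    obtain ⟨hα, hβ⟩ : |α| ≤ 1 ∧ |β - 2 * π| ≤ 1 := h
    rw [abs_le] at hα hβ
    exact ⟨show α < β by linarith, 0, show _ ∈ Icc α β by constructor <;> push_cast <;> linarith⟩
  | 3 =>
    have hαβ : 2 * π ≤ β - α := h
    exact ⟨show α < β by linarith, exists_odd_mul_pi_mem_Icc hαβ⟩

theorem AdmissCase.isUniquelySolvable {k : Fin 4} (h : AdmissCase k α β) :
    IsUniquelySolvable (ConfineSet k α β) α β ((shooting k).shotEnergy (endpoints k α β)) := by
  have hdata := h.endpoints_mem_data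
  match k with
  | 0 =>
    have hα : -1 ≤ α := hdata.1.1
    exact isUniquelySolvable_barrierProblem hdata subset_rfl fun x hx ↦
      (show -2 < α by linarith).trans_le hx.1
  | 1 =>
    obtain ⟨hα, hβ⟩ : |α + π| ≤ 1 ∧ |β| ≤ 1 := h
    rw [abs_le] at hα hβ
    have hrev : IsUniquelySolvable (Icc (-1) (1 + π)) (-β) (-α)
        (barrierProblem.shotEnergy (-β, -α)) :=
      isUniquelySolvable_barrierProblem (z := (-β, -α)) hdata
        (Icc_subset_Icc (by linarith) (max_le (by linarith) (by linarith)))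
        fun x hx ↦ (show (-2 : ℝ) < -1 by norm_num).trans_le hx.1
    have hC : -Icc (-1) (1 + π) = ConfineSet 1 α β := by
      rw [neg_Icc, neg_neg, neg_add']
      rfl
    have hsol := hrev.reverse
    rw [hC, neg_neg, neg_neg] at hsol
    exact hsol
  | 2 =>
    obtain ⟨hα, hβ⟩ : |α| ≤ 1 ∧ |β - 2 * π| ≤ 1 := h
    exact isUniquelySolvable_crossingProblem (z := (α, β)) hdata
      (Icc_subset_Icc (abs_le.mp hα).1 (by linarith [(abs_le.mp hβ).2]))
  | 3 => exact isUniquelySolvable_crossingProblem hdata subset_rfl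

end TwoPoint

theorem corollary_pendulum_general {ι : Type*} [Fintype ι] [Nonempty ι] (c : ι → Fin 4) {h : ℝ}
    (hh : 0 < h) (hcard : (Fintype.card ι : ℝ) ≤ 3 * h + 1) :
    ∃ Tstar : (ι → ℝ) × (ι → ℝ) → ℝ,
      ContDiffOn ℝ ∞ Tstar {qp | ∀ i, AdmissCase (c i) (qp.1 i) (qp.2 i)} ∧
      ∀ q p : ι → ℝ, (∀ i, AdmissCase (c i) (q i) (p i)) →
        (∀ T : ℝ, 0 < T →
          ∃ X W : ι → ℝ → ℝ,
            (∀ i, IsConnectingSol (ConfineSet (c i) (q i) (p i)) (q i) (p i) T (X i) (W i)) ∧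
            ∀ Y U : ι → ℝ → ℝ,
              (∀ i, IsConnectingSol (ConfineSet (c i) (q i) (p i)) (q i) (p i) T (Y i) (U i)) →
              ∀ i, EqOn (Y i) (X i) (Icc 0 T)) ∧
        0 < Tstar (q, p) ∧
        ∀ T : ℝ, 0 < T → ∀ X W : ι → ℝ → ℝ,
          (∀ i, IsConnectingSol (ConfineSet (c i) (q i) (p i)) (q i) (p i) T (X i) (W i)) →
          (∑ i, energy (X i 0) (W i 0) = h ↔ T = Tstar (q, p)) := by
  refine ⟨fun qp ↦ transitTime (fun i ↦ shooting (c i)) h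
    fun i ↦ endpoints (c i) (qp.1 i) (qp.2 i), ?_, fun q p hqp ↦ ?_⟩
  · exact (contDiffOn_transitTime hh hcard).comp
      (contDiff_pi.mpr fun i ↦ contDiff_endpoints (c i) i).contDiffOn
      fun qp hqp i ↦ (hqp i).endpoints_mem_data
  have hdata (i : ι) := (hqp i).endpoints_mem_data
  have hsolv (i : ι) := (hqp i).isUniquelySolvable
  refine ⟨fun T hT ↦ ?_, transitTime_pos hh hdata, fun T hT X W hX ↦ ?_⟩
  · choose X W hX using fun i ↦ (hsolv i).exists_sol hT
    exact ⟨X, W, hX, fun Y U hY i ↦ (hsolv i).eqOn hT (hY i) (hX i)⟩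
  · rw [Finset.sum_congr rfl fun i _ ↦ (hsolv i).energy_eq hT (hX i)]
    exact totalEnergy_eq_iff hh hcard hdata hT

/-- **Corollary of the Pendulum Lemma.** For the uncoupled system of four pendula
`ẍᵢ + sin xᵢ = 0` and admissible boundary data `q, p ∈ ℝ⁴` (each coordinate pair
`(qᵢ, pᵢ)` in one of the admissible cases `c i`), for every `T > 0` there is a
unique suitably confined solution from `q` to `p` in time `T`; moreover there is a
unique `T* > 0` for which the total energy of this solution is `1`, and `T*`
depends smoothly on `(q, p)`. -/
theorem corollary_pendulum (c : Fin 4 → Fin 4) :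
    ∃ Tstar : ((Fin 4 → ℝ) × (Fin 4 → ℝ)) → ℝ,
      ContDiffOn ℝ (⊤ : ℕ∞) Tstar
        {qp : (Fin 4 → ℝ) × (Fin 4 → ℝ) | ∀ i, AdmissCase (c i) (qp.1 i) (qp.2 i)} ∧
      ∀ q p : Fin 4 → ℝ, (∀ i, AdmissCase (c i) (q i) (p i)) →
        (∀ T : ℝ, 0 < T →
          ∃ X W : Fin 4 → ℝ → ℝ,
            (∀ i, IsPendSolOn (X i) (W i) (Set.Icc 0 T) ∧ X i 0 = q i ∧ X i T = p i ∧
              ∀ t ∈ Set.Icc 0 T, X i t ∈ ConfineSet (c i) (q i) (p i)) ∧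
            ∀ Y U : Fin 4 → ℝ → ℝ,
              (∀ i, IsPendSolOn (Y i) (U i) (Set.Icc 0 T) ∧ Y i 0 = q i ∧ Y i T = p i ∧
                ∀ t ∈ Set.Icc 0 T, Y i t ∈ ConfineSet (c i) (q i) (p i)) →
              ∀ i, Set.EqOn (Y i) (X i) (Set.Icc 0 T)) ∧
        0 < Tstar (q, p) ∧
        (∀ T : ℝ, 0 < T → ∀ X W : Fin 4 → ℝ → ℝ,
          (∀ i, IsPendSolOn (X i) (W i) (Set.Icc 0 T) ∧ X i 0 = q i ∧ X i T = p i ∧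
            ∀ t ∈ Set.Icc 0 T, X i t ∈ ConfineSet (c i) (q i) (p i)) →
          ((∑ i, ((W i 0) ^ 2 / 2 + Vpend (X i 0))) = 1 ↔ T = Tstar (q, p))) := by
  exact corollary_pendulum_general c one_pos (by norm_num)
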